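/- arXiv:1108.4980 — 2 statements merged into one kernel-verified Lean document; each statement's English description precedes it below -/
import Mathlib

section
/- lim_{N→∞} Σ_{n=−N+1}^{N−1} Σ_{m∈ℤ} (−1)^{m+n} / ((5m)² + (5n+1)²) = −(π/(5√5)) · log( √5 + 1 − √(5 + 2√5) ) + (π/25) · log( 11 + 5√5 ). -/
open Filter

noncomputable section JTP

/-- finite q-Pochhammer `(q²;q²)_n`. -/
def lambP (q : ℝ) (n : ℕ) : ℝ := ∏ i ∈ Finset.range n, (1 - (q ^ 2) ^ (i + 1))

/-- reciprocal of `lambP`, extended by zero to negative integers. -/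
def lambI (q : ℝ) (k : ℤ) : ℝ := if k < 0 then 0 else (lambP q k.toNat)⁻¹

lemma lamb_fac_pos {q : ℝ} (h0 : 0 < q) (h1 : q < 1) (i : ℕ) : 0 < 1 - (q ^ 2) ^ (i + 1) := by
  have : (q ^ 2) ^ (i + 1) < 1 := pow_lt_one₀ (by positivity) (by nlinarith) (by omega)
  linarith

lemma lambP_pos {q : ℝ} (h0 : 0 < q) (h1 : q < 1) (n : ℕ) : 0 < lambP q n :=
  Finset.prod_pos fun i _ => lamb_fac_pos h0 h1 i

lemma lambI_rec {q : ℝ} (h0 : 0 < q) (h1 : q < 1) (k : ℤ) :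
    lambI q (k - 1) = (1 - (q ^ 2) ^ k) * lambI q k := by
  rcases lt_trichotomy k 0 with h | h | h
  · simp [lambI, h, show k - 1 < 0 by omega]
  · subst h; simp [lambI]
  · obtain ⟨m, rfl⟩ : ∃ m : ℕ, k = m + 1 := ⟨(k - 1).toNat, by omega⟩
    have e1 : ((m : ℤ) + 1 - 1) = m := by ring
    have e2 : ((m : ℤ) + 1).toNat = m + 1 := by omega
    simp only [lambI, e1, e2, show ¬ ((m : ℤ) < 0) by omega, show ¬ ((m : ℤ) + 1 < 0) by omega,
      if_false, Int.toNat_natCast]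
    have h2 : lambP q (m + 1) = lambP q m * (1 - (q ^ 2) ^ (m + 1)) := by
      simp [lambP, Finset.prod_range_succ]
    have e3 : (q ^ 2) ^ ((m : ℤ) + 1) = (q ^ 2) ^ (m + 1) := by
      rw [← zpow_natCast]; push_cast; rfl
    rw [h2, e3]
    have := (lamb_fac_pos h0 h1 m).ne'
    have := (lambP_pos h0 h1 m).ne'
    field_simp

lemma lamb_key {q : ℝ} (h0 : 0 < q) (h1 : q < 1) (N : ℕ) (n : ℤ) :
    lambP q (2 * (N + 1)) * lambI q ((N + 1 : ℕ) + n) * lambI q ((N + 1 : ℕ) - n) * q ^ (n ^ 2)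
    = (1 + q ^ (4 * N + 2)) * (lambP q (2 * N) * lambI q (N + n) * lambI q (N - n) * q ^ (n ^ 2))
    + q ^ (2 * N + 1) * (lambP q (2 * N) * lambI q (N + (n - 1)) * lambI q (N - (n - 1))
        * q ^ ((n - 1) ^ 2))
    + q ^ (2 * N + 1) * (lambP q (2 * N) * lambI q (N + (n + 1)) * lambI q (N - (n + 1))
        * q ^ ((n + 1) ^ 2)) := by
  have hP : lambP q (2 * (N + 1)) = lambP q (2 * N) * (1 - (q ^ 2) ^ (2 * N + 1))
      * (1 - (q ^ 2) ^ (2 * N + 1 + 1)) := by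
    rw [show 2 * (N + 1) = 2 * N + 1 + 1 by ring]
    simp [lambP, Finset.prod_range_succ]
  have a1 := lambI_rec h0 h1 ((N : ℤ) + 1 + n)
  have a2 := lambI_rec h0 h1 ((N : ℤ) + n)
  have b1 := lambI_rec h0 h1 ((N : ℤ) + 1 - n)
  have b2 := lambI_rec h0 h1 ((N : ℤ) - n)
  rw [show (N : ℤ) + 1 + n - 1 = N + n by ring] at a1
  rw [show (N : ℤ) + 1 - n - 1 = N - n by ring] at b1
  push_cast
  rw [show (N : ℤ) + (n - 1) = N + n - 1 by ring, show (N : ℤ) - (n - 1) = N + 1 - n by ring,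
    show (N : ℤ) + (n + 1) = N + 1 + n by ring, show (N : ℤ) - (n + 1) = N - n - 1 by ring,
    a2, b2, a1, b1, hP]
  have hq : q ≠ 0 := h0.ne'
  have e1 : q ^ ((n - 1) ^ 2) = q ^ (n ^ 2) * ((q ^ n) ^ 2)⁻¹ * q := by
    rw [show (n - 1) ^ 2 = n ^ 2 + -(n * 2) + 1 by ring, zpow_add₀ hq, zpow_add₀ hq, zpow_neg,
      zpow_mul]; norm_cast; simp
  have e2 : q ^ ((n + 1) ^ 2) = q ^ (n ^ 2) * (q ^ n) ^ 2 * q := by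
    rw [show (n + 1) ^ 2 = n ^ 2 + (n * 2) + 1 by ring, zpow_add₀ hq, zpow_add₀ hq,
      zpow_mul]; norm_cast; simp
  have f (k : ℤ) : (q ^ 2) ^ k = (q ^ k) ^ 2 := by
    rw [← zpow_natCast, ← zpow_natCast, ← zpow_mul, ← zpow_mul, mul_comm]
  rw [e1, e2, f, f, f, f]
  simp only [zpow_add₀ hq, zpow_sub₀ hq, zpow_natCast, zpow_one]
  have hB : q ^ n ≠ 0 := zpow_ne_zero _ hq
  generalize q ^ n = B at *
  generalize q ^ (n ^ 2) = C at *
  field_simp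
  ring

lemma lamb_finite {q : ℝ} (h0 : 0 < q) (h1 : q < 1) {z : ℂ} (hz : z ≠ 0) (N : ℕ) :
    HasSum (fun n : ℤ => ((lambP q (2 * N) * lambI q (N + n) * lambI q (N - n)
      * q ^ (n ^ 2) : ℝ) : ℂ) * z ^ n)
      (∏ j ∈ Finset.range N, ((1 + z * (q : ℂ) ^ (2 * j + 1)) * (1 + z⁻¹ * (q : ℂ) ^ (2 * j + 1)))) := by
  induction N with
  | zero =>
    have := hasSum_single (f := (fun n : ℤ => ((lambP q (2 * 0) * lambI q ((0 : ℕ) + n) * lambI q ((0 : ℕ) - n)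
      * q ^ (n ^ 2) : ℝ) : ℂ) * z ^ n)) 0 (by
        intro n hn
        rcases lt_or_gt_of_ne hn with h | h
        · simp [lambI, h]
        · simp [lambI, h])
    simpa [lambI, lambP] using this
  | succ N ih =>
    have s1 := (((Equiv.subRight (1 : ℤ)).hasSum_iff).mpr ih).mul_left (z * (q : ℂ) ^ (2 * N + 1))
    have s2 := (((Equiv.addRight (1 : ℤ)).hasSum_iff).mpr ih).mul_left (z⁻¹ * (q : ℂ) ^ (2 * N + 1))
    have s := ((ih.mul_left (1 + (q : ℂ) ^ (4 * N + 2))).add s1).add s2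
    rw [Finset.prod_range_succ]
    convert! s using 1
    · funext n
      rw [lamb_key h0 h1]
      simp only [Function.comp, Equiv.subRight_apply, Equiv.coe_addRight]
      rw [zpow_add₀ hz, zpow_sub₀ hz]
      push_cast
      field_simp
    · field_simp
      ring


/-- `(q²;q²)_∞`. -/
def lambE (q : ℝ) : ℝ := ∏' n : ℕ, (1 - (q ^ 2) ^ (n + 1))

lemma lamb_summable_geom {r : ℝ} (h0 : 0 < r) (h1 : r < 1) : Summable fun n : ℕ => r ^ (n + 1) :=
  (summable_nat_add_iff 1).mpr (summable_geometric_of_lt_one h0.le h1)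

lemma lambE_multipliable {q : ℝ} (h0 : 0 < q) (h1 : q < 1) :
    Multipliable fun n : ℕ => (1 - (q ^ 2) ^ (n + 1)) := by
  have := Real.multipliable_one_add_of_summable
    (lamb_summable_geom (r := q ^ 2) (by positivity) (by nlinarith)).neg
  simpa [sub_eq_add_neg] using this

lemma lambP_tendsto {q : ℝ} (h0 : 0 < q) (h1 : q < 1) :
    Tendsto (lambP q) atTop (nhds (lambE q)) :=
  (lambE_multipliable h0 h1).hasProd.tendsto_prod_nat

lemma lambE_pos {q : ℝ} (h0 : 0 < q) (h1 : q < 1) : 0 < lambE q := by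
  have hs := Real.summable_log_one_add_of_summable
    (lamb_summable_geom (r := q ^ 2) (by positivity) (by nlinarith)).neg
  have := Real.rexp_tsum_eq_tprod (f := fun n : ℕ => (1 - (q ^ 2) ^ (n + 1)))
    (lamb_fac_pos h0 h1) (by simpa [sub_eq_add_neg] using hs)
  rw [lambE, ← this]
  positivity

lemma lambP_antitone {q : ℝ} (h0 : 0 < q) (h1 : q < 1) : Antitone (lambP q) := by
  apply antitone_nat_of_succ_le
  intro n
  rw [lambP, Finset.prod_range_succ]
  have h2 := lambP_pos h0 h1 n
  have : 0 < (q ^ 2) ^ (n + 1) := by positivity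
  exact mul_le_of_le_one_right h2.le (by linarith)

lemma lambE_le {q : ℝ} (h0 : 0 < q) (h1 : q < 1) (n : ℕ) : lambE q ≤ lambP q n :=
  (lambP_antitone h0 h1).le_of_tendsto (lambP_tendsto h0 h1) n

lemma lambI_nonneg {q : ℝ} (h0 : 0 < q) (h1 : q < 1) (k : ℤ) : 0 ≤ lambI q k := by
  unfold lambI; split_ifs
  · rfl
  · exact inv_nonneg.mpr (lambP_pos h0 h1 _).le

lemma lambI_le {q : ℝ} (h0 : 0 < q) (h1 : q < 1) (k : ℤ) : lambI q k ≤ (lambE q)⁻¹ := by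
  unfold lambI; split_ifs
  · exact inv_nonneg.mpr (lambE_pos h0 h1).le
  · exact inv_anti₀ (lambE_pos h0 h1) (lambE_le h0 h1 _)

lemma lambI_tendsto {q : ℝ} (h0 : 0 < q) (h1 : q < 1) :
    Tendsto (lambI q) atTop (nhds (lambE q)⁻¹) := by
  have h : Tendsto (fun k : ℤ => (lambP q k.toNat)⁻¹) atTop (nhds (lambE q)⁻¹) := by
    refine Tendsto.inv₀ ((lambP_tendsto h0 h1).comp ?_) (lambE_pos h0 h1).ne'
    exact tendsto_atTop.mpr fun b => by
      filter_upwards [eventually_ge_atTop (b : ℤ)] with k hk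
      omega
  refine h.congr' ?_
  filter_upwards [eventually_ge_atTop 0] with k hk
  simp [lambI, not_lt.mpr hk]

lemma lamb_summable {q : ℝ} (h0 : 0 < q) (h1 : q < 1) {z : ℂ} (hz : z ≠ 0) :
    Summable fun n : ℤ => ((q ^ (n ^ 2) : ℝ) : ℂ) * z ^ n := by
  have hl : Real.log q < 0 := Real.log_neg h0 h1
  have h := (summable_jacobiTheta₂_term_iff (Complex.log z / (2 * Real.pi * Complex.I))
    (Complex.I * (-(Real.log q) / Real.pi : ℝ))).mpr (by
      simp only [Complex.mul_im, Complex.I_re, Complex.I_im, Complex.ofReal_re, Complex.ofReal_im]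
      have := Real.pi_pos
      have : 0 < -Real.log q / Real.pi := div_pos (by linarith) this
      simpa using this)
  refine h.congr fun n => ?_
  rw [jacobiTheta₂_term]
  have hpi : (Real.pi : ℂ) ≠ 0 := by exact_mod_cast Real.pi_ne_zero
  have e : 2 * Real.pi * Complex.I * n * (Complex.log z / (2 * Real.pi * Complex.I))
      + Real.pi * Complex.I * n ^ 2 * (Complex.I * (-(Real.log q) / Real.pi : ℝ))
      = n * Complex.log z + ((n ^ 2 : ℤ) : ℂ) * (Real.log q : ℂ) := by
    have := Complex.I_ne_zero
    push_cast
    field_simp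
    rw [Complex.I_sq]; ring
  rw [e, Complex.exp_add, Complex.exp_int_mul, Complex.exp_int_mul, Complex.exp_log hz,
    ← Complex.ofReal_exp, Real.exp_log h0]
  push_cast
  ring

lemma lamb_mult_z {q : ℝ} (h0 : 0 < q) (h1 : q < 1) (z : ℂ) :
    Multipliable fun j : ℕ => (1 + z * (q : ℂ) ^ (2 * j + 1)) := by
  apply Complex.multipliable_one_add_of_summable
  have : Summable fun j : ℕ => (z * q) * ((q : ℂ) ^ 2) ^ j := by
    apply Summable.mul_left
    apply summable_geometric_of_norm_lt_one
    rw [norm_pow, Complex.norm_real, Real.norm_of_nonneg h0.le]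
    nlinarith
  refine this.congr fun j => ?_
  rw [pow_add, pow_mul]; ring

/-- Jacobi triple product. -/
theorem lamb_jtp {q : ℝ} (h0 : 0 < q) (h1 : q < 1) {z : ℂ} (hz : z ≠ 0) :
    HasSum (fun n : ℤ => ((q ^ (n ^ 2) : ℝ) : ℂ) * z ^ n)
      (lambE q * ((∏' j : ℕ, (1 + z * (q : ℂ) ^ (2 * j + 1)))
        * ∏' j : ℕ, (1 + z⁻¹ * (q : ℂ) ^ (2 * j + 1)))) := by
  have hs := lamb_summable h0 h1 hz
  have hE := lambE_pos h0 h1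
  have t1 : Tendsto (fun N : ℕ => ∏ j ∈ Finset.range N,
      ((1 + z * (q : ℂ) ^ (2 * j + 1)) * (1 + z⁻¹ * (q : ℂ) ^ (2 * j + 1)))) atTop
      (nhds ((∏' j : ℕ, (1 + z * (q : ℂ) ^ (2 * j + 1)))
        * ∏' j : ℕ, (1 + z⁻¹ * (q : ℂ) ^ (2 * j + 1)))) :=
    ((lamb_mult_z h0 h1 z).hasProd.mul (lamb_mult_z h0 h1 z⁻¹).hasProd).tendsto_prod_nat
  have t2 : Tendsto (fun N : ℕ => ∑' n : ℤ, ((lambP q (2 * N) * lambI q (N + n) * lambI q (N - n)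
      * q ^ (n ^ 2) : ℝ) : ℂ) * z ^ n) atTop
      (nhds (∑' n : ℤ, (((lambE q)⁻¹ * q ^ (n ^ 2) : ℝ) : ℂ) * z ^ n)) := by
    apply tendsto_tsum_of_dominated_convergence
      (bound := fun n : ℤ => ((lambE q)⁻¹ * (lambE q)⁻¹) * ‖((q ^ (n ^ 2) : ℝ) : ℂ) * z ^ n‖)
    · exact hs.norm.mul_left _
    · intro n
      refine Tendsto.mul_const _ ?_
      refine (Complex.continuous_ofReal.tendsto _).comp ?_
      refine Tendsto.mul_const _ ?_
      have u1 : Tendsto (fun N : ℕ => lambP q (2 * N)) atTop (nhds (lambE q)) :=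
        (lambP_tendsto h0 h1).comp (tendsto_id.const_mul_atTop' (by norm_num))
      have u2 : Tendsto (fun N : ℕ => lambI q (N + n)) atTop (nhds (lambE q)⁻¹) :=
        (lambI_tendsto h0 h1).comp (tendsto_atTop_add_const_right _ _ tendsto_natCast_atTop_atTop)
      have u3 : Tendsto (fun N : ℕ => lambI q (N - n)) atTop (nhds (lambE q)⁻¹) :=
        (lambI_tendsto h0 h1).comp (tendsto_atTop_add_const_right _ _ tendsto_natCast_atTop_atTop)
      have := (u1.mul u2).mul u3
      simpa [hE.ne'] using this
    · refine Eventually.of_forall fun N n => ?_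
      rw [norm_mul, norm_mul, Complex.norm_real, Complex.norm_real, ← mul_assoc, norm_mul]
      gcongr
      have i1 := lambI_nonneg h0 h1 (N + n)
      have i2 := lambI_nonneg h0 h1 (N - n)
      have i3 := lambP_pos h0 h1 (2 * N)
      have i4 : lambP q (2 * N) ≤ 1 := by simpa [lambP] using lambP_antitone h0 h1 (Nat.zero_le (2 * N))
      rw [Real.norm_of_nonneg (by positivity)]
      calc _ ≤ 1 * (lambE q)⁻¹ * (lambE q)⁻¹ := by
            gcongr
            · exact lambI_le h0 h1 _
            · exact lambI_le h0 h1 _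
        _ = _ := by ring
  have t3 := tendsto_nhds_unique t1 (t2.congr fun N => (lamb_finite h0 h1 hz N).tsum_eq)
  rw [t3]
  have e : (∑' n : ℤ, (((lambE q)⁻¹ * q ^ (n ^ 2) : ℝ) : ℂ) * z ^ n)
      = ((lambE q : ℝ) : ℂ)⁻¹ * ∑' n : ℤ, ((q ^ (n ^ 2) : ℝ) : ℂ) * z ^ n := by
    rw [← tsum_mul_left]
    congr 1; funext n; push_cast; ring
  rw [e, ← mul_assoc, mul_inv_cancel₀ (by exact_mod_cast hE.ne'), one_mul]
  exact hs.hasSum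

end JTP

noncomputable section Theta

/-- theta series with real characteristic. -/
def lTh (t s : ℝ) : ℝ := ∑' n : ℤ, Real.exp (-Real.pi * t * (n + s) ^ 2)

/-- nome -/
def lQ (t : ℝ) : ℝ := Real.exp (-Real.pi * t)

def lW (t s : ℝ) : ℝ := ∏' j : ℕ, (1 + Real.exp (-Real.pi * t * (2 * j + 1 + 2 * s)))

def lV (t c : ℝ) : ℝ := ∏' j : ℕ, (1 + 2 * c * lQ t ^ (2 * j + 1) + (lQ t ^ (2 * j + 1)) ^ 2)

lemma lamb_exp_int_mul (n : ℤ) (x : ℝ) : Real.exp (n * x) = Real.exp x ^ n := by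
  rw [mul_comm, Real.exp_mul, Real.rpow_intCast]

lemma lQ_pos (t : ℝ) : 0 < lQ t := Real.exp_pos _

lemma lQ_lt {t : ℝ} (ht : 0 < t) : lQ t < 1 := by
  rw [lQ, Real.exp_lt_one_iff]
  have := Real.pi_pos
  nlinarith

lemma lamb_ofReal_tprod (f : ℕ → ℝ) (hf : Multipliable f) :
    ((∏' j, f j : ℝ) : ℂ) = ∏' j, (f j : ℂ) :=
  hf.map_tprod Complex.ofRealHom Complex.continuous_ofReal

lemma lW_summable {t : ℝ} (ht : 0 < t) (s : ℝ) :
    Summable fun j : ℕ => Real.exp (-Real.pi * t * (2 * j + 1 + 2 * s)) := by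
  have : Summable fun j : ℕ => Real.exp (-Real.pi * t * (1 + 2 * s)) * (lQ t ^ 2) ^ j := by
    apply Summable.mul_left
    have h0 := lQ_pos t
    have h1 := lQ_lt ht
    exact summable_geometric_of_lt_one (by positivity) (by nlinarith)
  refine this.congr fun j => ?_
  rw [lQ, ← Real.exp_nat_mul, ← Real.exp_nat_mul, ← Real.exp_add]
  congr 1; push_cast; ring

lemma lW_mult {t : ℝ} (ht : 0 < t) (s : ℝ) :
    Multipliable fun j : ℕ => (1 + Real.exp (-Real.pi * t * (2 * j + 1 + 2 * s))) :=
  Real.multipliable_one_add_of_summable (lW_summable ht s)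

lemma lW_pos {t : ℝ} (ht : 0 < t) (s : ℝ) : 0 < lW t s := by
  have := Real.rexp_tsum_eq_tprod
    (f := fun j : ℕ => (1 + Real.exp (-Real.pi * t * (2 * j + 1 + 2 * s))))
    (fun j => by positivity) (Real.summable_log_one_add_of_summable (lW_summable ht s))
  rw [lW, ← this]
  positivity

lemma lTh_aux {t : ℝ} (ht : 0 < t) (s : ℝ) :
    HasSum (fun n : ℤ => Real.exp (-Real.pi * t * (n + s) ^ 2))
      (Real.exp (-Real.pi * t * s ^ 2) * lambE (lQ t) * (lW t s * lW t (-s))) := by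
  have h := lamb_jtp (lQ_pos t) (lQ_lt ht)
    (z := ((Real.exp (-Real.pi * t * (2 * s)) : ℝ) : ℂ)) (by exact_mod_cast (Real.exp_pos _).ne')
  have w1 : (∏' j : ℕ, (1 + ((Real.exp (-Real.pi * t * (2 * s)) : ℝ) : ℂ) *
      (lQ t : ℂ) ^ (2 * j + 1))) = (lW t s : ℂ) := by
    rw [lW, lamb_ofReal_tprod _ (lW_mult ht s)]
    congr 1; funext j
    norm_cast
    rw [lQ, ← Real.exp_nat_mul, ← Real.exp_add]
    congr 2; push_cast; ring
  have w2 : (∏' j : ℕ, (1 + ((Real.exp (-Real.pi * t * (2 * s)) : ℝ) : ℂ)⁻¹ *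
      (lQ t : ℂ) ^ (2 * j + 1))) = (lW t (-s) : ℂ) := by
    rw [lW, lamb_ofReal_tprod _ (lW_mult ht (-s))]
    congr 1; funext j
    norm_cast
    rw [lQ, ← Real.exp_nat_mul, ← Real.exp_neg, ← Real.exp_add]
    congr 2; push_cast; ring
  rw [w1, w2] at h
  norm_cast at h
  have h2 := h.mul_left (Real.exp (-Real.pi * t * s ^ 2))
  rw [mul_assoc]
  convert! h2 using 1
  funext n
  rw [lQ, ← lamb_exp_int_mul, ← lamb_exp_int_mul, ← Real.exp_add, ← Real.exp_add]
  congr 1; push_cast; ring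

lemma lTh_summable {t : ℝ} (ht : 0 < t) (s : ℝ) :
    Summable (fun n : ℤ => Real.exp (-Real.pi * t * (n + s) ^ 2)) := (lTh_aux ht s).summable

lemma lTh_prod {t : ℝ} (ht : 0 < t) (s : ℝ) :
    lTh t s = Real.exp (-Real.pi * t * s ^ 2) * lambE (lQ t) * (lW t s * lW t (-s)) :=
  (lTh_aux ht s).tsum_eq

lemma lTh_pos {t : ℝ} (ht : 0 < t) (s : ℝ) : 0 < lTh t s := by
  rw [lTh_prod ht]
  have := lambE_pos (lQ_pos t) (lQ_lt ht)
  have := lW_pos ht s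
  have := lW_pos ht (-s)
  positivity

lemma lTh_neg (t s : ℝ) : lTh t (-s) = lTh t s := by
  rw [lTh, lTh, ← (Equiv.neg ℤ).tsum_eq]
  congr 1; funext n
  simp only [Equiv.neg_apply]; congr 1; push_cast; ring

lemma lTh_add_one (t s : ℝ) : lTh t (s + 1) = lTh t s := by
  rw [lTh, lTh, ← (Equiv.addRight (1 : ℤ)).tsum_eq (fun n : ℤ => Real.exp (-Real.pi * t * (n + s) ^ 2))]
  congr 1; funext n
  simp only [Equiv.coe_addRight]; congr 1; push_cast; ring

lemma lTh_poisson {t : ℝ} (ht : 0 < t) (s : ℝ) :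
    (∑' n : ℤ, ((lQ t ^ (n ^ 2) : ℝ) : ℂ) * Complex.exp (2 * Real.pi * s * Complex.I) ^ n) * √t
      = lTh (1 / t) s := by
  have h := Complex.tsum_exp_neg_quadratic (a := (t : ℂ)) (by simpa using ht) (Complex.I * s)
  have e1 : (∑' n : ℤ, Complex.exp (-Real.pi * t * n ^ 2 + 2 * Real.pi * (Complex.I * s) * n))
      = ∑' n : ℤ, ((lQ t ^ (n ^ 2) : ℝ) : ℂ) * Complex.exp (2 * Real.pi * s * Complex.I) ^ n := by
    congr 1; funext n
    rw [lQ, ← lamb_exp_int_mul, ← Complex.exp_int_mul, Complex.ofReal_exp, ← Complex.exp_add]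
    congr 1; push_cast; ring
  have e2 : (∑' n : ℤ, Complex.exp (-Real.pi / t * (n + Complex.I * (Complex.I * s)) ^ 2))
      = lTh (1 / t) s := by
    rw [← lTh_neg, lTh, Complex.ofReal_tsum]
    congr 1; funext n
    rw [Complex.ofReal_exp]
    congr 1; push_cast
    rw [← mul_assoc, Complex.I_mul_I]; ring
  have e3 : (t : ℂ) ^ (1 / 2 : ℂ) = (√t : ℝ) := by
    rw [Real.sqrt_eq_rpow, Complex.ofReal_cpow ht.le]; norm_num
  rw [e1, e2, e3] at h
  rw [h]
  have : ((√t : ℝ) : ℂ) ≠ 0 := by exact_mod_cast (Real.sqrt_pos.mpr ht).ne'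
  field_simp

lemma lV_summable {t : ℝ} (ht : 0 < t) (c : ℝ) :
    Summable fun j : ℕ => (2 * c * lQ t ^ (2 * j + 1) + (lQ t ^ (2 * j + 1)) ^ 2) := by
  have h0 := lQ_pos t
  have h1 := lQ_lt ht
  have s1 : Summable fun j : ℕ => (2 * c * lQ t) * (lQ t ^ 2) ^ j :=
    (summable_geometric_of_lt_one (by positivity) (by nlinarith)).mul_left _
  have s2 : Summable fun j : ℕ => (lQ t ^ 2) * (lQ t ^ 4) ^ j :=
    (summable_geometric_of_lt_one (by positivity)
      (pow_lt_one₀ h0.le h1 (by norm_num))).mul_left _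
  refine (s1.add s2).congr fun j => ?_
  ring

lemma lV_mult {t : ℝ} (ht : 0 < t) (c : ℝ) :
    Multipliable fun j : ℕ => (1 + 2 * c * lQ t ^ (2 * j + 1) + (lQ t ^ (2 * j + 1)) ^ 2) := by
  have := Real.multipliable_one_add_of_summable (lV_summable ht c)
  simpa [add_assoc] using this

lemma lTh_dual {t : ℝ} (ht : 0 < t) (s : ℝ) :
    lTh (1 / t) s = √t * lambE (lQ t) * lV t (Real.cos (2 * Real.pi * s)) := by
  have hz : Complex.exp (2 * Real.pi * s * Complex.I) ≠ 0 := Complex.exp_ne_zero _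
  have h := (lamb_jtp (lQ_pos t) (lQ_lt ht) hz).tsum_eq
  have h2 := lTh_poisson ht s
  rw [h, ← (lamb_mult_z (lQ_pos t) (lQ_lt ht) _).tprod_mul (lamb_mult_z (lQ_pos t) (lQ_lt ht) _)] at h2
  have e : (∏' j : ℕ, ((1 + Complex.exp (2 * Real.pi * s * Complex.I) * (lQ t : ℂ) ^ (2 * j + 1)) *
      (1 + (Complex.exp (2 * Real.pi * s * Complex.I))⁻¹ * (lQ t : ℂ) ^ (2 * j + 1))))
      = (lV t (Real.cos (2 * Real.pi * s)) : ℝ) := by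
    rw [lV, lamb_ofReal_tprod _ (lV_mult ht _)]
    congr 1; funext j
    push_cast
    have : (2 : ℂ) * Complex.cos (2 * Real.pi * s) = Complex.exp (2 * Real.pi * s * Complex.I)
      + (Complex.exp (2 * Real.pi * s * Complex.I))⁻¹ := by
      rw [Complex.two_cos, ← Complex.exp_neg]; congr 2; ring
    rw [this]
    field_simp
    ring
  rw [e] at h2
  have h3 : lTh (1 / t) s = lambE (lQ t) * lV t (Real.cos (2 * Real.pi * s)) * √t := by
    exact_mod_cast h2.symm
  rw [h3]; ring

lemma lTh_inv {t : ℝ} (ht : 0 < t) : lTh (1 / t) 0 = √t * lTh t 0 := by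
  have h2 := lTh_poisson ht 0
  have e : (∑' n : ℤ, ((lQ t ^ (n ^ 2) : ℝ) : ℂ) * Complex.exp (2 * Real.pi * (0 : ℝ) * Complex.I) ^ n)
     = lTh t 0 := by
    rw [lTh, Complex.ofReal_tsum]
    congr 1; funext n
    simp only [Complex.ofReal_zero, mul_zero, zero_mul, Complex.exp_zero, one_zpow, mul_one]
    rw [lQ, ← lamb_exp_int_mul]
    congr 2; push_cast; ring
  rw [e] at h2
  have h3 : lTh (1 / t) 0 = lTh t 0 * √t := by exact_mod_cast h2.symm
  rw [h3]; ring

/-- product with minus signs -/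
def lY (t : ℝ) : ℝ := ∏' j : ℕ, (1 - lQ t ^ (2 * j + 1))

lemma lY_summable {t : ℝ} (ht : 0 < t) : Summable fun j : ℕ => lQ t ^ (2 * j + 1) := by
  have h0 := lQ_pos t
  have h1 := lQ_lt ht
  have s1 : Summable fun j : ℕ => (lQ t) * (lQ t ^ 2) ^ j :=
    (summable_geometric_of_lt_one (by positivity) (by nlinarith)).mul_left _
  refine s1.congr fun j => ?_
  ring

lemma lY_mult {t : ℝ} (ht : 0 < t) : Multipliable fun j : ℕ => (1 - lQ t ^ (2 * j + 1)) := by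
  have := Real.multipliable_one_add_of_summable (lY_summable ht).neg
  simpa [sub_eq_add_neg] using this

lemma lTh_four {t : ℝ} (ht : 0 < t) : lTh (1 / t) (1 / 2) = √t * lambE (lQ t) * lY t ^ 2 := by
  rw [lTh_dual ht, show 2 * Real.pi * (1 / 2) = Real.pi by ring, Real.cos_pi, sq, lY,
    ← (lY_mult ht).tprod_mul (lY_mult ht), lV]
  congr 2; funext j; ring

lemma lW_half {t : ℝ} (ht : 0 < t) : lW t (-(1 / 2)) = 2 * lW t (1 / 2) := by
  have h : Tendsto (fun N : ℕ => ∏ j ∈ Finset.range (N + 1),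
      (1 + Real.exp (-Real.pi * t * (2 * j + 1 + 2 * (-(1 / 2)))))) atTop (nhds (lW t (-(1 / 2)))) :=
    (tendsto_add_atTop_iff_nat 1).mpr (lW_mult ht (-(1 / 2))).hasProd.tendsto_prod_nat
  have h2 := ((lW_mult ht (1 / 2)).hasProd.tendsto_prod_nat).const_mul 2
  refine tendsto_nhds_unique h (h2.congr fun N => ?_)
  rw [Finset.prod_range_succ', mul_comm]
  congr 1
  · apply Finset.prod_congr rfl
    intro j _
    congr 2; push_cast; ring
  · norm_num

/-- Euler: `XYZ = 1`. -/
lemma lXYZ {t : ℝ} (ht : 0 < t) : lW t 0 * lW t (1 / 2) * lY t = 1 := by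
  have h0 := lQ_pos t
  have h1 := lQ_lt ht
  have hE := lambE_pos h0 h1
  have sg := lamb_summable_geom h0 h1
  have m1 : Multipliable fun n : ℕ => 1 + lQ t ^ (n + 1) := Real.multipliable_one_add_of_summable sg
  have m2 : Multipliable fun n : ℕ => 1 - lQ t ^ (n + 1) := by
    simpa [sub_eq_add_neg] using Real.multipliable_one_add_of_summable sg.neg
  have wa : (fun k : ℕ => 1 + lQ t ^ (2 * k + 1)) =
      fun j : ℕ => (1 + Real.exp (-Real.pi * t * (2 * j + 1 + 2 * 0))) := by
    funext j; rw [lQ, ← Real.exp_nat_mul]; congr 2; push_cast; ring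
  have wb : (fun k : ℕ => 1 + lQ t ^ (2 * k + 1 + 1)) =
      fun j : ℕ => (1 + Real.exp (-Real.pi * t * (2 * j + 1 + 2 * (1 / 2)))) := by
    funext j; rw [lQ, ← Real.exp_nat_mul]; congr 2; push_cast; ring
  have wc : (fun k : ℕ => 1 - lQ t ^ (2 * k + 1 + 1)) =
      fun n : ℕ => (1 - (lQ t ^ 2) ^ (n + 1)) := by
    funext j; ring
  have s1 := tprod_even_mul_odd (f := fun n : ℕ => 1 + lQ t ^ (n + 1))
    (by simpa only [wa] using lW_mult ht 0) (by simpa only [wb] using lW_mult ht (1 / 2))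
  have s2 := tprod_even_mul_odd (f := fun n : ℕ => 1 - lQ t ^ (n + 1))
    (lY_mult ht) (by simpa only [wc] using lambE_multipliable h0 h1)
  have s3 := m1.tprod_mul m2
  simp only [wa, wb] at s1
  simp only [wc] at s2
  have e : (∏' n : ℕ, (1 + lQ t ^ (n + 1)) * (1 - lQ t ^ (n + 1))) = lambE (lQ t) := by
    rw [lambE]; congr 1; funext n; ring
  rw [e, ← s1, ← s2] at s3
  change lambE (lQ t) = lW t 0 * lW t (1 / 2) * (lY t * lambE (lQ t)) at s3
  have : lambE (lQ t) * (lW t 0 * lW t (1 / 2) * lY t) = lambE (lQ t) * 1 := by linarith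
  exact mul_left_cancel₀ hE.ne' this

/-- `θ₂θ₃θ₄ = 2η³`. -/
def lG (t : ℝ) : ℝ := 2 * Real.exp (-Real.pi * t / 4) * lambE (lQ t) ^ 3

lemma lG_eq {t : ℝ} (ht : 0 < t) :
    √t * lG t = lTh t 0 * lTh t (1 / 2) * lTh (1 / t) (1 / 2) := by
  rw [lTh_four ht, lTh_prod ht 0, lTh_prod ht (1 / 2), lW_half ht, lG]
  have h := lXYZ ht
  have e : Real.exp (-Real.pi * t * (1 / 2) ^ 2) = Real.exp (-Real.pi * t / 4) := by
    congr 1; ring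
  rw [e]
  simp only [neg_zero]
  have h2 : (lW t 0 * lW t (1 / 2) * lY t) ^ 2 = 1 := by rw [h]; norm_num
  simp only [ne_eq, OfNat.ofNat_ne_zero, not_false_eq_true, zero_pow, mul_zero, Real.exp_zero]
  linear_combination (-2 * √t * Real.exp (-Real.pi * t / 4) * lambE (lQ t) ^ 3) * h2

lemma lamb_tprod_five (f : ℕ → ℝ) (hf : Multipliable f) (hi : ∀ i, Multipliable fun k => f (5 * k + i)) :
    ∏' n, f n = (∏' k, f (5 * k)) * (∏' k, f (5 * k + 1)) * (∏' k, f (5 * k + 2))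
      * (∏' k, f (5 * k + 3)) * (∏' k, f (5 * k + 4)) := by
  have h : Tendsto (fun N : ℕ => ∏ j ∈ Finset.range (5 * N), f j) atTop (nhds (∏' n, f n)) :=
    hf.hasProd.tendsto_prod_nat.comp (tendsto_id.const_mul_atTop' (by norm_num))
  have g (i : ℕ) := (hi i).hasProd.tendsto_prod_nat
  refine tendsto_nhds_unique h
    (((((g 0).mul (g 1)).mul (g 2)).mul (g 3)).mul (g 4) |>.congr fun N => ?_)
  induction N with
  | zero => simp
  | succ N ih =>
    rw [show 5 * (N + 1) = 5 * N + 1 + 1 + 1 + 1 + 1 by ring]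
    simp only [Finset.prod_range_succ]
    rw [← ih]
    simp only [add_zero, add_assoc, Nat.reduceAdd]
    ring

lemma lW_five {t : ℝ} (ht : 0 < t) : lW t 0 = lW (5 * t) (-(2 / 5)) * lW (5 * t) (-(1 / 5))
    * lW (5 * t) 0 * lW (5 * t) (1 / 5) * lW (5 * t) (2 / 5) := by
  have key (i : ℕ) : (fun k : ℕ => (1 + Real.exp (-Real.pi * t * (2 * ((5 * k + i : ℕ) : ℝ) + 1 + 2 * 0))))
      = fun j : ℕ => (1 + Real.exp (-Real.pi * (5 * t) * (2 * j + 1 + 2 * (((i : ℝ) - 2) / 5)))) := by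
    funext j; congr 2; push_cast; ring
  have := lamb_tprod_five _ (lW_mult ht 0) (fun i => by
    rw [key]; exact lW_mult (by positivity) _)
  rw [← lW] at this
  rw [this]
  have k0 := key 0
  rw [key 1, key 2, key 3, key 4]
  simp only [add_zero] at k0
  simp only [add_zero, k0]
  simp only [lW]
  norm_num

lemma lF12 {t : ℝ} (ht : 0 < t) :
    (lTh (5 * t) (1 / 5) * lTh (5 * t) (2 / 5)) * lW (5 * t) 0
      = Real.exp (-Real.pi * t) * lambE (lQ (5 * t)) ^ 2 * lW t 0 := by
  have h5 : 0 < 5 * t := by positivity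
  rw [lTh_prod h5, lTh_prod h5, lW_five ht]
  have e : Real.exp (-Real.pi * t) = Real.exp (-Real.pi * (5 * t) * (1 / 5) ^ 2)
      * Real.exp (-Real.pi * (5 * t) * (2 / 5) ^ 2) := by
    rw [← Real.exp_add]; congr 1; ring
  rw [e]; ring

lemma lF12_six {t : ℝ} (ht : 0 < t) :
    16 * lG t * lTh (5 * t) 0 ^ 3 * (lTh (5 * t) (1 / 5) * lTh (5 * t) (2 / 5)) ^ 6
      = lG (5 * t) ^ 5 * lTh t 0 ^ 3 := by
  have h5 : 0 < 5 * t := by positivity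
  have h := lF12 ht
  generalize lTh (5 * t) (1 / 5) * lTh (5 * t) (2 / 5) = F at *
  rw [lTh_prod h5, lTh_prod ht, lG, lG]
  have h6 : (F * lW (5 * t) 0) ^ 6 = (Real.exp (-Real.pi * t) * lambE (lQ (5 * t)) ^ 2 * lW t 0) ^ 6 := by
    rw [h]
  have e : Real.exp (-Real.pi * t / 4) * Real.exp (-Real.pi * t) ^ 6
      = Real.exp (-Real.pi * (5 * t) / 4) ^ 5 := by
    rw [← Real.exp_nat_mul, ← Real.exp_nat_mul, ← Real.exp_add]; congr 1; push_cast; ring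
  simp only [neg_zero, ne_eq, OfNat.ofNat_ne_zero, not_false_eq_true, zero_pow, mul_zero, Real.exp_zero]
  rw [mul_pow] at h6
  linear_combination (32 * Real.exp (-Real.pi * t / 4) * lambE (lQ t) ^ 3 * lambE (lQ (5 * t)) ^ 3) * h6
    + 32 * lambE (lQ t) ^ 3 * lambE (lQ (5 * t)) ^ 15 * lW t 0 ^ 6 * e

end Theta

noncomputable section Lattice

lemma lTh_mul_summable {t : ℝ} (ht : 0 < t) (s s' : ℝ) :
    Summable (fun p : ℤ × ℤ => Real.exp (-Real.pi * t * ((p.1 + s) ^ 2 + (p.2 + s') ^ 2))) := by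
  have := Summable.mul_of_nonneg (lTh_summable ht s) (lTh_summable ht s')
    (fun _ => (Real.exp_pos _).le) (fun _ => (Real.exp_pos _).le)
  refine this.congr fun p => ?_
  rw [← Real.exp_add]; congr 1; ring

lemma lTh_mul {t : ℝ} (ht : 0 < t) (s s' : ℝ) : lTh t s * lTh t s' =
    ∑' p : ℤ × ℤ, Real.exp (-Real.pi * t * ((p.1 + s) ^ 2 + (p.2 + s') ^ 2)) := by
  rw [lTh, lTh, (lTh_summable ht s).tsum_mul_tsum (lTh_summable ht s')
    (Summable.mul_of_nonneg (lTh_summable ht s) (lTh_summable ht s')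
    (fun _ => (Real.exp_pos _).le) (fun _ => (Real.exp_pos _).le))]
  congr 1; funext p
  rw [← Real.exp_add]; congr 1; ring

lemma lamb_tsum_fin {n : ℕ} {β γ : Type} (e : Fin n × β ≃ γ) (f : γ → ℝ) (hf : Summable f) :
    ∑' c, f c = ∑ r, ∑' b, f (e (r, b)) := by
  rw [← e.tsum_eq, ← tsum_fintype (L := .unconditional _)]
  exact Summable.tsum_prod ((e.summable_iff).mpr hf)

def lE2 : Fin 2 × (ℤ × ℤ) ≃ ℤ × ℤ :=
  Equiv.ofBijective (fun x => (x.2.1 + x.2.2 + ((x.1 : ℕ) : ℤ), x.2.1 - x.2.2)) (by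
    constructor
    · rintro ⟨r, u, v⟩ ⟨r', u', v'⟩ h
      simp only [Prod.mk.injEq] at h ⊢
      refine ⟨Fin.ext ?_, ?_, ?_⟩ <;> omega
    · rintro ⟨a, b⟩
      refine ⟨(⟨((a - b) % 2).toNat, by omega⟩, (b + (a - b) / 2, (a - b) / 2)), ?_⟩
      simp only [Prod.mk.injEq]
      constructor <;> omega)

def lE5 : Fin 5 × (ℤ × ℤ) ≃ ℤ × ℤ :=
  Equiv.ofBijective (fun x => (2 * x.2.1 + x.2.2 + ((x.1 : ℕ) : ℤ), x.2.1 - 2 * x.2.2)) (by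
    constructor
    · rintro ⟨r, u, v⟩ ⟨r', u', v'⟩ h
      simp only [Prod.mk.injEq] at h ⊢
      refine ⟨Fin.ext ?_, ?_, ?_⟩ <;> omega
    · rintro ⟨a, b⟩
      refine ⟨(⟨((a - 2 * b) % 5).toNat, by omega⟩, (b + 2 * ((a - 2 * b) / 5), (a - 2 * b) / 5)), ?_⟩
      simp only [Prod.mk.injEq]
      constructor <;> omega)

lemma lTh_double {t : ℝ} (ht : 0 < t) (s s' : ℝ) : lTh t s * lTh t s' =
    lTh (2 * t) ((s + s') / 2) * lTh (2 * t) ((s - s') / 2)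
    + lTh (2 * t) ((s + s') / 2 + 1 / 2) * lTh (2 * t) ((s - s') / 2 + 1 / 2) := by
  have h2 : 0 < 2 * t := by positivity
  rw [lTh_mul ht, lamb_tsum_fin lE2 _ (lTh_mul_summable ht s s'),
     Fin.sum_univ_two, lTh_mul h2, lTh_mul h2]
  congr 1
  · congr 1; funext p
    rw [show lE2 (0, p) = (p.1 + p.2 + ((0 : ℕ) : ℤ), p.1 - p.2) from rfl]
    congr 1; push_cast; ring
  · congr 1; funext p
    rw [show lE2 (1, p) = (p.1 + p.2 + ((1 : ℕ) : ℤ), p.1 - p.2) from rfl]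
    congr 1; push_cast; ring

lemma lTh_quint {t : ℝ} (ht : 0 < t) : lTh t 0 ^ 2 =
    lTh (5 * t) 0 ^ 2 + 4 * (lTh (5 * t) (1 / 5) * lTh (5 * t) (2 / 5)) := by
  have h5 : 0 < 5 * t := by positivity
  have key (r : Fin 5) : (∑' c : ℤ × ℤ, Real.exp (-Real.pi * t * ((((lE5 (r, c)).1 : ℤ) + 0) ^ 2
      + (((lE5 (r, c)).2 : ℤ) + 0) ^ 2)))
      = lTh (5 * t) (2 * ((r : ℕ) : ℝ) / 5) * lTh (5 * t) (((r : ℕ) : ℝ) / 5) := by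
    rw [lTh_mul h5]
    congr 1; funext p
    rw [show lE5 (r, p) = (2 * p.1 + p.2 + ((r : ℕ) : ℤ), p.1 - 2 * p.2) from rfl]
    congr 1; push_cast; ring
  rw [sq, lTh_mul ht, lamb_tsum_fin lE5 _ (lTh_mul_summable ht 0 0),
     Fin.sum_univ_five]
  simp only [key]
  have p (s : ℝ) := lTh_add_one (5 * t) s
  have n (s : ℝ) := lTh_neg (5 * t) s
  have a3 : lTh (5 * t) (3 / 5) = lTh (5 * t) (2 / 5) := by
    rw [← n (2 / 5), ← p (-(2 / 5))]; norm_num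
  have a4 : lTh (5 * t) (4 / 5) = lTh (5 * t) (1 / 5) := by
    rw [← n (1 / 5), ← p (-(1 / 5))]; norm_num
  have a6 : lTh (5 * t) (6 / 5) = lTh (5 * t) (1 / 5) := by
    rw [← p (1 / 5)]; norm_num
  have a8 : lTh (5 * t) (8 / 5) = lTh (5 * t) (2 / 5) := by
    rw [← a3, ← p (3 / 5)]; norm_num
  norm_num
  rw [a3, a4, a6, a8]
  ring

lemma lTh_split : lTh (1 / 5) 0 = lTh 5 0 + 2 * lTh 5 (1 / 5) + 2 * lTh 5 (2 / 5) := by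
  have hs := lTh_summable (t := 1 / 5) (by norm_num) 0
  let e := (Equiv.prodComm (Fin 5) ℤ).trans (Int.divModEquiv 5).symm
  have key (r : Fin 5) : (∑' c : ℤ, Real.exp (-Real.pi * (1 / 5) * (((e (r, c) : ℤ) : ℝ) + 0) ^ 2))
      = lTh 5 (((r : ℕ) : ℝ) / 5) := by
    rw [lTh]
    congr 1; funext p
    simp only [e, Equiv.trans_apply, Equiv.prodComm_apply, Prod.swap, Int.divModEquiv_symm_apply]
    congr 1; push_cast; ring
  rw [lTh, lamb_tsum_fin e _ hs,
     Fin.sum_univ_five]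
  simp only [key]
  have p (s : ℝ) := lTh_add_one 5 s
  have n (s : ℝ) := lTh_neg 5 s
  have a3 : lTh 5 (3 / 5) = lTh 5 (2 / 5) := by
    rw [← n (2 / 5), ← p (-(2 / 5))]; norm_num
  have a4 : lTh 5 (4 / 5) = lTh 5 (1 / 5) := by
    rw [← n (1 / 5), ← p (-(1 / 5))]; norm_num
  norm_num
  rw [a3, a4]
  ring

lemma lTh_sum : 2 * (lTh 5 (1 / 5) + lTh 5 (2 / 5)) = (√5 - 1) * lTh 5 0 := by
  have h := lTh_inv (t := 5) (by norm_num)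
  rw [lTh_split] at h
  linarith

/-- lemniscatic value: `θ₃(i)⁴ = 2 θ₂(i)⁴`. -/
lemma lTh_lemn : lTh 1 0 ^ 2 = √2 * lTh 1 (1 / 2) ^ 2 := by
  have d1 := lTh_double (t := 1) (by norm_num) 0 0
  have d2 := lTh_double (t := 1) (by norm_num) (1 / 2) (1 / 2)
  have d3 := lTh_double (t := 1 / 2) (by norm_num) 0 0
  have i1 := lTh_inv (t := 2) (by norm_num)
  have p1 := lTh_add_one 2 0
  norm_num at d1 d2 d3 p1
  rw [p1] at d2
  rw [i1] at d3
  have hb := lTh_pos (t := 2) (by norm_num) 0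
  have hc := lTh_pos (t := 2) (by norm_num) (1 / 2)
  have hx := lTh_pos (t := 1) (by norm_num) 0
  have hy := lTh_pos (t := 1) (by norm_num) (1 / 2)
  generalize lTh 1 0 = x at *
  generalize lTh 1 (1 / 2) = y at *
  generalize lTh 2 0 = a at *
  generalize lTh 2 (1 / 2) = b at *
  have s2 : √2 * √2 = 2 := Real.mul_self_sqrt (by norm_num)
  have k : a ^ 2 - b ^ 2 = 2 * (a * b) := by
    have : √2 * √2 * (a * a) = x * x + y * y := by linarith
    rw [s2] at this
    linarith
  have h4 : (x ^ 2) ^ 2 = (√2 * y ^ 2) ^ 2 := by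
    have e1 : x ^ 2 = a ^ 2 + b ^ 2 := by linarith
    have e2 : y ^ 2 = 2 * (a * b) := by linarith
    rw [e1, e2, mul_pow, sq (√2), s2]
    linear_combination (a ^ 2 - b ^ 2 + 2 * (a * b)) * k
  exact (pow_left_inj₀ (by positivity) (by positivity) two_ne_zero).mp h4

lemma lG_one : √2 * lG 1 = lTh 1 0 ^ 3 := by
  have h := lG_eq (t := 1) (by norm_num)
  have l := lTh_lemn
  norm_num at h l
  rw [h]
  linear_combination (-lTh 1 0) * l

lemma lG_inv : lG (1 / 5) = √5 ^ 3 * lG 5 := by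
  have h1 := lG_eq (t := 5) (by norm_num)
  have h2 := lG_eq (t := 1 / 5) (by norm_num)
  have i := lTh_inv (t := 5) (by norm_num)
  rw [one_div_one_div, i] at h2
  have h5 : 0 < √5 := by positivity
  have e : √(1 / 5) = (√5)⁻¹ := by rw [one_div, Real.sqrt_inv]
  rw [e] at h2
  have h3 : lG (1 / 5) = √5 * (√5 * lTh 5 0 * lTh (1 / 5) (1 / 2) * lTh 5 (1 / 2)) := by
    rw [← h2]; field_simp
  rw [h3]
  linear_combination (-√5 ^ 2) * h1

/-- quintic modular relation at the lemniscatic point -/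
lemma lamb_m (m : ℝ) (h1 : 1 < m) (h : (5 - m) ^ 5 * (m - 1) = 64 * m ^ 5) :
    m = 5 * √5 - 10 := by
  have h2 : (m ^ 2 + 20 * m - 25) ^ 2 * (m ^ 2 - 2 * m + 5) = 0 := by linear_combination -h
  have h3 : m ^ 2 + 20 * m - 25 = 0 := by
    have : m ^ 2 - 2 * m + 5 ≠ 0 := by nlinarith [sq_nonneg (m - 1)]
    simpa [this] using h2
  have s5 : √5 ^ 2 = 5 := Real.sq_sqrt (by norm_num)
  have h4 : (m + 10) ^ 2 = (5 * √5) ^ 2 := by rw [mul_pow, s5]; linarith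
  have := (pow_left_inj₀ (by linarith) (by positivity) two_ne_zero).mp h4
  linarith

lemma lamb_ratio : lTh 1 0 ^ 2 = (5 * √5 - 10) * lTh 5 0 ^ 2 := by
  have q1 := lTh_quint (t := 1) (by norm_num)
  have q2 := lTh_quint (t := 1 / 5) (by norm_num)
  have s1 := lF12_six (t := 1) (by norm_num)
  have s2 := lF12_six (t := 1 / 5) (by norm_num)
  have g1 := lG_one
  have g2 := lG_inv
  have i1 := lTh_inv (t := 5) (by norm_num)
  have hF1 := lTh_pos (t := 5) (by norm_num) (1 / 5)
  have hF2 := lTh_pos (t := 5) (by norm_num) (2 / 5)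
  have hH1 := lTh_pos (t := 1) (by norm_num) (1 / 5)
  have hH2 := lTh_pos (t := 1) (by norm_num) (2 / 5)
  have hx := lTh_pos (t := 1) (by norm_num) 0
  have hy := lTh_pos (t := 5) (by norm_num) 0
  simp only [mul_one, show (5 : ℝ) * (1 / 5) = 1 by norm_num] at q1 q2 s1 s2
  rw [i1] at q2 s2
  rw [g2] at s2
  have hF := mul_pos hF1 hF2
  have hH := mul_pos hH1 hH2
  generalize lTh 5 (1 / 5) * lTh 5 (2 / 5) = F at *
  generalize lTh 1 (1 / 5) * lTh 1 (2 / 5) = H at *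
  generalize lTh 1 0 = x at *
  generalize lTh 5 0 = y at *
  generalize lG 1 = G at *
  generalize lG 5 = g at *
  have r5 : √5 ^ 2 = 5 := Real.sq_sqrt (by norm_num)
  have r2 : √2 ^ 2 = 2 := Real.sq_sqrt (by norm_num)
  have p5 : 0 < √5 := by positivity
  have p2 : 0 < √2 := by positivity
  have hG : G = x ^ 3 / √2 := by rw [← g1]; field_simp
  subst hG
  have t1 : 16 * y ^ 3 * F ^ 6 = √2 * g ^ 5 := by
    field_simp at s1; linarith
  have t2 : 64 * √2 * g * H ^ 6 = x ^ 12 * y ^ 3 := by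
    have e : (x ^ 3 / √2) ^ 5 = x ^ 15 / (4 * √2) := by
      rw [div_pow]
      rw [show √2 ^ 5 = (√2 ^ 2) ^ 2 * √2 by ring, r2]; ring
    rw [e] at s2
    field_simp at s2
    linarith
  -- eliminate `g`
  have t3 : 4 ^ 18 * F ^ 6 * H ^ 30 = x ^ 60 * y ^ 12 := by
    have h5 : (64 * √2 * g * H ^ 6) ^ 5 = (x ^ 12 * y ^ 3) ^ 5 := by rw [t2]
    have h6 : (64 ^ 5 * √2 ^ 4) * (√2 * g ^ 5) * H ^ 30 = x ^ 60 * y ^ 15 := by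
      linear_combination h5
    rw [← t1, show √2 ^ 4 = (√2 ^ 2) ^ 2 by ring, r2] at h6
    have : y ^ 3 * (4 ^ 18 * F ^ 6 * H ^ 30) = y ^ 3 * (x ^ 60 * y ^ 12) := by
      linear_combination h6
    exact mul_left_cancel₀ (by positivity) this
  have t4 : 64 * F * H ^ 5 = x ^ 10 * y ^ 2 := by
    have : (64 * F * H ^ 5) ^ 6 = (x ^ 10 * y ^ 2) ^ 6 := by linear_combination t3
    exact (pow_left_inj₀ (by positivity) (by positivity) (by norm_num)).mp this
  have hF' : F = (x ^ 2 - y ^ 2) / 4 := by linarith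
  have hH' : H = (5 * y ^ 2 - x ^ 2) / 4 := by rw [mul_pow, r5] at q2; linarith
  have hm := lamb_m (x ^ 2 / y ^ 2) (by rw [lt_div_iff₀ (by positivity)]; linarith) (by
    rw [hF', hH'] at t4
    field_simp
    linear_combination 64 * t4)
  rw [← hm]
  field_simp

end Lattice

noncomputable section Values

def lFac (c : ℝ) (j : ℕ) : ℝ :=
  1 + 2 * c * lQ (1 / 5) ^ (2 * j + 1) + (lQ (1 / 5) ^ (2 * j + 1)) ^ 2

def lL (c : ℝ) : ℝ := ∑' j : ℕ, Real.log (lFac c j)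

lemma lQ5_pow (j : ℕ) : 0 < lQ (1 / 5) ^ (2 * j + 1) ∧ lQ (1 / 5) ^ (2 * j + 1) < 1 :=
  ⟨pow_pos (lQ_pos _) _, pow_lt_one₀ (lQ_pos _).le (lQ_lt (by norm_num)) (by omega)⟩

lemma lFac_pos {c : ℝ} (hc : -1 ≤ c) (j : ℕ) : 0 < lFac c j := by
  obtain ⟨h0, h1⟩ := lQ5_pow j
  unfold lFac
  nlinarith [mul_nonneg (by linarith : 0 ≤ c + 1) h0.le, pow_pos (sub_pos.2 h1) 2]

lemma lFac_log_summable (c : ℝ) : Summable fun j => Real.log (lFac c j) := by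
  have := Real.summable_log_one_add_of_summable (lV_summable (t := 1 / 5) (by norm_num) c)
  refine this.congr fun j => ?_
  rw [lFac]; congr 1; ring

lemma lV_exp {c : ℝ} (hc : -1 ≤ c) : lV (1 / 5) c = Real.exp (lL c) := by
  have := Real.rexp_tsum_eq_tprod (f := lFac c) (fun j => lFac_pos hc j) (lFac_log_summable c)
  rw [lL, this]; rfl

lemma lL_mono {c d : ℝ} (hc : -1 ≤ c) (h : c ≤ d) : lL c ≤ lL d := by
  refine Summable.tsum_le_tsum (fun j => ?_) (lFac_log_summable c) (lFac_log_summable d)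
  refine Real.log_le_log (lFac_pos hc j) ?_
  obtain ⟨h0, h1⟩ := lQ5_pow j
  unfold lFac
  nlinarith [mul_nonneg (sub_nonneg.2 h) h0.le]

lemma lTh5_exp (s : ℝ) : lTh 5 s =
    √(1 / 5) * lambE (lQ (1 / 5)) * Real.exp (lL (Real.cos (2 * Real.pi * s))) := by
  have := lTh_dual (t := 1 / 5) (by norm_num) s
  rw [← lV_exp (Real.neg_one_le_cos _), ← this]; norm_num

lemma lTh5_log (s : ℝ) : Real.log (lTh 5 s) =
    Real.log (√(1 / 5) * lambE (lQ (1 / 5))) + lL (Real.cos (2 * Real.pi * s)) := by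
  have : 0 < √(1 / 5) * lambE (lQ (1 / 5)) :=
    mul_pos (by positivity) (lambE_pos (lQ_pos _) (lQ_lt (by norm_num)))
  rw [lTh5_exp, Real.log_mul this.ne' (Real.exp_pos _).ne', Real.log_exp]

lemma lcos1 : Real.cos (2 * Real.pi / 5) = (√5 - 1) / 4 := by
  have h5 : √5 ^ 2 = 5 := Real.sq_sqrt (by norm_num)
  rw [show 2 * Real.pi / 5 = 2 * (Real.pi / 5) by ring, Real.cos_two_mul, Real.cos_pi_div_five]
  linear_combination h5 / 8

lemma lcos2 : Real.cos (4 * Real.pi / 5) = -(√5 + 1) / 4 := by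
  have h5 : √5 ^ 2 = 5 := Real.sq_sqrt (by norm_num)
  rw [show 4 * Real.pi / 5 = Real.pi - Real.pi / 5 by ring, Real.cos_pi_sub, Real.cos_pi_div_five]
  ring

lemma lamb_value : -(Real.pi / (5 * √5)) * Real.log (√5 + 1 - √(5 + 2 * √5))
      + Real.pi / 25 * Real.log (11 + 5 * √5) =
    2 * Real.pi / 25 * (lL 1 + (√5 - 1) / 2 * lL ((√5 - 1) / 4)
      - (√5 + 1) / 2 * lL (-(√5 + 1) / 4)) := by
  have h5 : √5 ^ 2 = 5 := Real.sq_sqrt (by norm_num)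
  have h5l : (2 : ℝ) < √5 := Real.lt_sqrt_of_sq_lt (by norm_num)
  have h5u : √5 < 3 := by nlinarith
  have e0 := lTh5_log 0
  have e1 := lTh5_log (1 / 5)
  have e2 := lTh5_log (2 / 5)
  rw [mul_zero, Real.cos_zero] at e0
  rw [show 2 * Real.pi * (1 / 5) = 2 * Real.pi / 5 by ring, lcos1] at e1
  rw [show 2 * Real.pi * (2 / 5) = 4 * Real.pi / 5 by ring, lcos2] at e2
  have hle : lL (-(√5 + 1) / 4) ≤ lL ((√5 - 1) / 4) := lL_mono (by linarith) (by linarith)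
  have p0 := lTh_pos (t := 5) (by norm_num) 0
  have p1 := lTh_pos (t := 5) (by norm_num) (1 / 5)
  have p2 := lTh_pos (t := 5) (by norm_num) (2 / 5)
  have hs := lTh_sum
  have hq := lTh_quint (t := 1) (by norm_num)
  rw [lamb_ratio, mul_one] at hq
  have h21 : lTh 5 (2 / 5) ≤ lTh 5 (1 / 5) := by
    rw [← Real.log_le_log_iff p2 p1]; linarith
  set A := lTh 5 0
  set B := lTh 5 (1 / 5)
  set C := lTh 5 (2 / 5)
  have hBC : 4 * (B * C) = (5 * √5 - 11) * A ^ 2 := by linarith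
  have hprod : (11 + 5 * √5) * (B * C) = A ^ 2 := by
    linear_combination (11 + 5 * √5) / 4 * hBC + 25 / 4 * A ^ 2 * h5
  have hr : C / B = √5 + 1 - √(5 + 2 * √5) := by
    have hquad : C ^ 2 - (2 + 2 * √5) * (B * C) + B ^ 2 = 0 := by
      have h1 : 4 * (B + C) ^ 2 = (√5 - 1) ^ 2 * A ^ 2 := by
        rw [← mul_pow, ← hs]; ring
      rw [← hprod] at h1
      linear_combination h1 / 4 + (B * C) * (5 * √5 + 1) / 4 * h5
    have hsq : √(5 + 2 * √5) = √5 + 1 - C / B := by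
      have hc1 : C / B ≤ 1 := (div_le_one p1).2 h21
      rw [Real.sqrt_eq_iff_mul_self_eq (by positivity) (by linarith)]
      field_simp
      linear_combination -hquad - B ^ 2 * h5
    linarith
  have hlr : Real.log (C / B) = Real.log C - Real.log B := Real.log_div p2.ne' p1.ne'
  have hlp : Real.log (11 + 5 * √5) = 2 * Real.log A - Real.log B - Real.log C := by
    have := congrArg Real.log hprod
    rw [Real.log_mul (by positivity) (by positivity), Real.log_mul p1.ne' p2.ne', Real.log_pow] at this
    push_cast at this; linarith
  rw [← hr, hlr, hlp, e0, e1, e2]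
  have hinv : Real.pi / (5 * √5) = Real.pi * √5 / 25 := by
    field_simp; linear_combination -5 * h5
  rw [hinv]; ring

end Values

noncomputable section Series

lemma lamb_coth_nat {b : ℝ} (hb : 0 < b) : HasSum (fun n : ℕ => 1 / (((n : ℝ) + 1) ^ 2 + b ^ 2))
    ((Real.pi * (Real.cosh (Real.pi * b) / Real.sinh (Real.pi * b)) - 1 / b) / (2 * b)) := by
  have hx : (b : ℂ) * Complex.I ∈ Complex.integerComplement := by
    have := UpperHalfPlane.coe_mem_integerComplement ⟨(b : ℂ) * Complex.I, by simpa using hb⟩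
    simpa using this
  have h1 := (summable_cotTerm hx).hasSum
  have h2 := cot_series_rep' hx
  simp only [cotTerm] at h1
  rw [← h2] at h1
  have h3 := h1.mul_left (Complex.I / (2 * b))
  rw [← Complex.hasSum_ofReal]
  have hb' : (b : ℂ) ≠ 0 := by exact_mod_cast hb.ne'
  have hI : Complex.I ^ 2 = -1 := Complex.I_sq
  have hsh : Complex.sinh (Real.pi * b) ≠ 0 := by
    have : Real.sinh (Real.pi * b) ≠ 0 := (Real.sinh_pos_iff.2 (by positivity)).ne'
    have h := Complex.ofReal_ne_zero.2 this
    push_cast at h; exact h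
  convert! h3 using 1
  · funext n
    have hk : ((n : ℂ) + 1) ^ 2 + b ^ 2 ≠ 0 := by
      have : ((n : ℝ) + 1) ^ 2 + b ^ 2 ≠ 0 := by positivity
      exact_mod_cast this
    have ha : (b : ℂ) * Complex.I - (n + 1) ≠ 0 := by
      intro h; apply hk
      linear_combination (-(b : ℂ) * Complex.I - (n + 1)) * h + (b : ℂ) ^ 2 * hI
    have hc : (b : ℂ) * Complex.I + (n + 1) ≠ 0 := by
      intro h; apply hk
      linear_combination (-(b : ℂ) * Complex.I + (n + 1)) * h + (b : ℂ) ^ 2 * hI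
    push_cast
    field_simp
    linear_combination (-2 * b * ((n : ℂ) + 1) ^ 2) * hI
  · rw [Complex.cot_eq_cos_div_sin, ← mul_assoc, Complex.cos_mul_I, Complex.sin_mul_I]
    push_cast
    have := Complex.I_ne_zero
    field_simp

lemma lamb_coth {b : ℝ} (hb : 0 < b) : HasSum (fun n : ℤ => 1 / ((n : ℝ) ^ 2 + b ^ 2))
    (Real.pi / b * (Real.cosh (Real.pi * b) / Real.sinh (Real.pi * b))) := by
  have h := lamb_coth_nat hb
  have h0 : HasSum (fun n : ℕ => 1 / ((((n : ℤ) : ℝ)) ^ 2 + b ^ 2))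
      ((Real.pi * (Real.cosh (Real.pi * b) / Real.sinh (Real.pi * b)) - 1 / b) / (2 * b)
        + 1 / b ^ 2) := by
    rw [← hasSum_nat_add_iff' 1]
    simpa using h
  have h1 := HasSum.of_nat_of_neg_add_one (f := fun n : ℤ => 1 / ((n : ℝ) ^ 2 + b ^ 2)) h0
    (m' := (Real.pi * (Real.cosh (Real.pi * b) / Real.sinh (Real.pi * b)) - 1 / b) / (2 * b)) (by
      convert! h using 1
      funext n; push_cast; congr 2; ring)
  convert! h1 using 1
  field_simp
  ring

lemma lamb_alt {b : ℝ} (hb : 0 < b) : HasSum (fun n : ℤ => (-1 : ℝ) ^ n / ((n : ℝ) ^ 2 + b ^ 2))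
    (Real.pi / (b * Real.sinh (Real.pi * b))) := by
  have h1 := lamb_coth hb
  have h2 := (lamb_coth (half_pos hb)).mul_left (1 / 4)
  have hinj : Function.Injective (fun m : ℤ => 2 * m) := fun a b h => by simpa using h
  have h3 : HasSum (fun n : ℤ => if Even n then 1 / ((n : ℝ) ^ 2 + b ^ 2) else 0)
      (1 / 4 * (Real.pi / (b / 2) * (Real.cosh (Real.pi * (b / 2)) / Real.sinh (Real.pi * (b / 2))))) := by
    rw [← hinj.hasSum_iff]
    · convert! h2 using 1
      funext n
      simp only [Function.comp_apply, even_two_mul, if_true]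
      push_cast
      field_simp
      ring
    · intro x hx
      rw [if_neg]
      rintro ⟨r, hr⟩
      exact hx ⟨r, by simp [hr, two_mul]⟩
  convert! (h3.mul_left 2).sub h1 using 1
  · funext n
    split_ifs with h
    · rw [h.neg_one_zpow]; ring
    · rw [(Int.not_even_iff_odd.1 h).neg_one_zpow]; ring
  · set u := Real.pi * (b / 2) with hu
    have hpu : Real.pi * b = 2 * u := by rw [hu]; ring
    have hs : Real.sinh u ≠ 0 := (Real.sinh_pos_iff.2 (by positivity)).ne'
    have hc : Real.cosh u ≠ 0 := (Real.cosh_pos u).ne'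
    rw [hpu, Real.sinh_two_mul, Real.cosh_two_mul]
    have := Real.cosh_sq u
    field_simp
    linear_combination -4 * this

lemma lamb_inner_pos {a : ℝ} (ha : 0 < a) : HasSum (fun m : ℤ => (-1 : ℝ) ^ m / ((5 * (m : ℝ)) ^ 2 + a ^ 2))
    (Real.pi / (5 * a * Real.sinh (Real.pi * a / 5))) := by
  have h := (lamb_alt (b := a / 5) (by positivity)).mul_left (1 / 25)
  convert! h using 1
  · funext m; field_simp; norm_num
  · rw [mul_div_assoc]
    have : Real.sinh (Real.pi * (a / 5)) ≠ 0 := (Real.sinh_pos_iff.2 (by positivity)).ne'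
    field_simp; norm_num

lemma lamb_inner {a : ℝ} (ha : a ≠ 0) : HasSum (fun m : ℤ => (-1 : ℝ) ^ m / ((5 * (m : ℝ)) ^ 2 + a ^ 2))
    (Real.pi / (5 * a * Real.sinh (Real.pi * a / 5))) := by
  rcases ha.lt_or_gt with h | h
  · have := lamb_inner_pos (neg_pos.2 h)
    rw [neg_sq, mul_neg Real.pi, neg_div, Real.sinh_neg] at this
    convert! this using 2
    ring
  · exact lamb_inner_pos h

end Series

noncomputable section LogSeries

lemma lamb_log_series {Q φ : ℝ} (h0 : 0 < Q) (h1 : Q < 1) :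
    HasSum (fun k : ℕ => (-1 : ℝ) ^ (k + 1) * (2 * Real.cos (k * φ)) / k * Q ^ k)
      (Real.log (1 + 2 * Real.cos φ * Q + Q ^ 2)) := by
  set z : ℂ := Q * Complex.exp (φ * Complex.I) with hz
  have hn : ‖z‖ < 1 := by
    rw [hz, norm_mul, Complex.norm_exp_ofReal_mul_I, mul_one, Complex.norm_real]
    rwa [Real.norm_eq_abs, abs_of_pos h0]
  have h := (Complex.hasSum_re (Complex.hasSum_taylorSeries_log hn)).mul_left 2
  convert! h using 1
  · funext k
    have : (-1 : ℂ) ^ (k + 1) * z ^ k / k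
        = (((-1 : ℝ) ^ (k + 1) * Q ^ k / k : ℝ) : ℂ) * Complex.exp ((k * φ : ℝ) * Complex.I) := by
      rw [hz, mul_pow, ← Complex.exp_nat_mul]
      push_cast
      rw [mul_assoc (k : ℂ)]
      ring
    rw [this, Complex.re_ofReal_mul, Complex.exp_ofReal_mul_I_re]
    ring
  · have hre : z.re = Q * Real.cos φ := by
      rw [hz, Complex.re_ofReal_mul, Complex.exp_ofReal_mul_I_re]
    have him : z.im = Q * Real.sin φ := by
      rw [hz, Complex.im_ofReal_mul, Complex.exp_ofReal_mul_I_im]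
    have h2 : 2 * Real.log ‖1 + z‖ = Real.log (‖1 + z‖ ^ 2) := by
      rw [Real.log_pow]; norm_num
    rw [Complex.log_re, h2, Complex.sq_norm, Complex.normSq_apply]
    congr 1
    rw [Complex.add_re, Complex.add_im, Complex.one_re, Complex.one_im, hre, him]
    linear_combination -Q ^ 2 * Real.sin_sq_add_cos_sq φ

/-- geometric sum -/
lemma lamb_geom (k : ℕ) (hk : 0 < k) : HasSum (fun j : ℕ => (lQ (1 / 5) ^ (2 * j + 1)) ^ k)
    (1 / (2 * Real.sinh (Real.pi * k / 5))) := by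
  have hq0 := lQ_pos (1 / 5)
  have hq1 := lQ_lt (t := 1 / 5) (by norm_num)
  set q := lQ (1 / 5) with hq
  have hlt : q ^ (2 * k) < 1 := pow_lt_one₀ hq0.le hq1 (by omega)
  have h := (hasSum_geometric_of_lt_one (pow_nonneg hq0.le (2 * k)) hlt).mul_left (q ^ k)
  convert! h using 1
  · funext j; rw [← pow_mul, ← pow_mul, ← pow_add]; congr 1; ring
  · have e1 : Real.exp (Real.pi * k / 5) = (q ^ k)⁻¹ := by
      rw [hq, lQ, ← Real.exp_nat_mul, ← Real.exp_neg]; congr 1; ring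
    have e2 : Real.exp (-(Real.pi * k / 5)) = q ^ k := by
      rw [Real.exp_neg, e1, inv_inv]
    rw [Real.sinh_eq, e1, e2, mul_comm 2 k, pow_mul] at *
    have hp : 0 < q ^ k := pow_pos hq0 k
    have hne : 1 - (q ^ k) ^ 2 ≠ 0 := by linarith
    field_simp

lemma lL_series (φ : ℝ) : HasSum
    (fun k : ℕ => (-1 : ℝ) ^ (k + 1) * Real.cos (k * φ) / (k * Real.sinh (Real.pi * k / 5)))
    (lL (Real.cos φ)) := by
  have hq0 := lQ_pos (1 / 5)
  have hq1 := lQ_lt (t := 1 / 5) (by norm_num)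
  let F : ℕ × ℕ → ℝ := fun p => (-1 : ℝ) ^ (p.1 + 1) * (2 * Real.cos (p.1 * φ)) / p.1
    * (lQ (1 / 5) ^ (2 * p.2 + 1)) ^ p.1
  have hF : Summable F := by
    have hg := summable_geometric_of_lt_one hq0.le hq1
    have hm := (Summable.mul_of_nonneg hg hg (fun _ => pow_nonneg hq0.le _)
      (fun _ => pow_nonneg hq0.le _)).mul_left 2
    refine Summable.of_norm_bounded hm ?_
    rintro ⟨k, j⟩
    rcases Nat.eq_zero_or_pos k with rfl | hk
    · simp only [F, Nat.cast_zero, div_zero, zero_mul, norm_zero]; positivity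
    simp only [F]
    have hk1 : (1 : ℝ) ≤ k := by exact_mod_cast hk
    rw [norm_mul, norm_div, norm_mul, norm_mul, norm_pow, norm_neg, norm_one, one_pow, one_mul,
      Real.norm_eq_abs, Real.norm_eq_abs, Real.norm_eq_abs, Real.norm_eq_abs,
      abs_of_pos (by positivity : (0 : ℝ) < k), abs_two,
      abs_of_pos (by positivity : (0 : ℝ) < (lQ (1 / 5) ^ (2 * j + 1)) ^ k)]
    gcongr
    · rw [div_le_iff₀ (by positivity)]
      nlinarith [Real.abs_cos_le_one (k * φ)]
    · rw [← pow_mul, ← pow_add]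
      apply pow_le_pow_of_le_one hq0.le hq1.le
      nlinarith [Nat.zero_le (j * (k - 1))]
  have h1 : HasSum (fun k : ℕ => (-1 : ℝ) ^ (k + 1) * Real.cos (k * φ) /
      (k * Real.sinh (Real.pi * k / 5))) (∑' p, F p) := by
    refine hF.hasSum.prod_fiberwise fun k => ?_
    rcases Nat.eq_zero_or_pos k with rfl | hk
    · simp [F, hasSum_zero]
    have := (lamb_geom k hk).mul_left ((-1 : ℝ) ^ (k + 1) * (2 * Real.cos (k * φ)) / k)
    convert! this using 1
    have : Real.sinh (Real.pi * k / 5) ≠ 0 := (Real.sinh_pos_iff.2 (by positivity)).ne'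
    field_simp
  have h2 : HasSum (fun j : ℕ => Real.log (lFac (Real.cos φ) j)) (∑' p, F p) := by
    have hs : HasSum (F ∘ (Equiv.prodComm ℕ ℕ)) (∑' p, F p) :=
      (Equiv.hasSum_iff (Equiv.prodComm ℕ ℕ)).2 hF.hasSum
    refine hs.prod_fiberwise fun j => ?_
    exact lamb_log_series (lQ5_pow j).1 (lQ5_pow j).2
  rw [lL, h2.tsum_eq]
  exact h1

end LogSeries

noncomputable section Final

def lc (k : ℕ) : ℝ := 2 / 5 * (1 + (√5 - 1) / 2 * Real.cos (k * (2 * Real.pi / 5))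
  - (√5 + 1) / 2 * Real.cos (k * (4 * Real.pi / 5)))

def lg (k : ℕ) : ℝ := Real.pi / 5 * lc k * ((-1) ^ (k + 1) / (k * Real.sinh (Real.pi * k / 5)))

def lh (n : ℤ) : ℝ := (-1) ^ n * (Real.pi / (5 * (5 * (n : ℝ) + 1) *
  Real.sinh (Real.pi * (5 * (n : ℝ) + 1) / 5)))

lemma lg_hasSum : HasSum lg (-(Real.pi / (5 * √5)) * Real.log (√5 + 1 - √(5 + 2 * √5))
      + Real.pi / 25 * Real.log (11 + 5 * √5)) := by
  rw [lamb_value]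
  have h0 := lL_series 0
  have h1 := lL_series (2 * Real.pi / 5)
  have h2 := lL_series (4 * Real.pi / 5)
  rw [lcos1] at h1
  rw [lcos2] at h2
  rw [Real.cos_zero] at h0
  have h := ((h0.add (h1.mul_left ((√5 - 1) / 2))).sub (h2.mul_left ((√5 + 1) / 2))).mul_left
    (2 * Real.pi / 25)
  convert! h using 1
  funext k
  rw [mul_zero, Real.cos_zero, lg, lc]
  ring

lemma lc_add (N r : ℕ) : lc (5 * N + r) = lc r := by
  have e1 : Real.cos (((5 * N + r : ℕ) : ℝ) * (2 * Real.pi / 5)) = Real.cos (r * (2 * Real.pi / 5)) := by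
    rw [← Real.cos_add_nat_mul_two_pi (r * (2 * Real.pi / 5)) N]; congr 1; push_cast; ring
  have e2 : Real.cos (((5 * N + r : ℕ) : ℝ) * (4 * Real.pi / 5)) = Real.cos (r * (4 * Real.pi / 5)) := by
    rw [← Real.cos_add_nat_mul_two_pi (r * (4 * Real.pi / 5)) (2 * N)]; congr 1; push_cast; ring
  rw [lc, lc, e1, e2]

lemma lc_vals : lc 0 = 0 ∧ lc 1 = 1 ∧ lc 2 = 0 ∧ lc 3 = 0 ∧ lc 4 = 1 := by
  have h5 : √5 ^ 2 = 5 := Real.sq_sqrt (by norm_num)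
  have a6 : Real.cos (6 * Real.pi / 5) = -(√5 + 1) / 4 := by
    rw [← lcos2, ← Real.cos_two_pi_sub]; congr 1; ring
  have a8 : Real.cos (8 * Real.pi / 5) = (√5 - 1) / 4 := by
    rw [← lcos1, ← Real.cos_two_pi_sub]; congr 1; ring
  have a12 : Real.cos (12 * Real.pi / 5) = (√5 - 1) / 4 := by
    rw [← lcos1, ← Real.cos_add_two_pi (2 * Real.pi / 5)]; congr 1; ring
  have a16 : Real.cos (16 * Real.pi / 5) = -(√5 + 1) / 4 := by
    rw [← a6, ← Real.cos_add_two_pi (6 * Real.pi / 5)]; congr 1; ring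
  refine ⟨?_, ?_, ?_, ?_, ?_⟩
  · simp [lc]; ring
  · simp only [lc, Nat.cast_one, one_mul, lcos1, lcos2]; linear_combination h5 / 10
  · simp only [lc, Nat.cast_ofNat]
    rw [show 2 * (2 * Real.pi / 5) = 4 * Real.pi / 5 by ring,
      show 2 * (4 * Real.pi / 5) = 8 * Real.pi / 5 by ring, lcos2, a8]
    linear_combination -h5 / 10
  · simp only [lc, Nat.cast_ofNat]
    rw [show 3 * (2 * Real.pi / 5) = 6 * Real.pi / 5 by ring,
      show 3 * (4 * Real.pi / 5) = 12 * Real.pi / 5 by ring, a6, a12]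
    linear_combination -h5 / 10
  · simp only [lc, Nat.cast_ofNat]
    rw [show 4 * (2 * Real.pi / 5) = 8 * Real.pi / 5 by ring,
      show 4 * (4 * Real.pi / 5) = 16 * Real.pi / 5 by ring, a8, a16]
    linear_combination h5 / 10

lemma lg_zero {N r : ℕ} (h : lc r = 0) : lg (5 * N + r) = 0 := by
  rw [lg, lc_add, h]; ring

lemma lg_up (N : ℕ) : lg (5 * N + 6) = lh (N + 1 : ℕ) := by
  rw [lg, show 5 * N + 6 = 5 * (N + 1) + 1 by ring, lc_add, lc_vals.2.1, lh, zpow_natCast]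
  have : (-1 : ℝ) ^ (5 * (N + 1) + 1 + 1) = (-1) ^ (N + 1) := by
    rw [show 5 * (N + 1) + 1 + 1 = 2 * (2 * N + 3) + (N + 1) by ring, pow_add, pow_mul]; norm_num
  rw [this]; push_cast
  field_simp

lemma lg_down (N : ℕ) : lg (5 * N + 4) = lh (-(N + 1 : ℕ)) := by
  rw [lg, lc_add, lc_vals.2.2.2.2, lh, zpow_neg, zpow_natCast]
  have hi : ((-1 : ℝ) ^ (N + 1))⁻¹ = (-1) ^ (N + 1) := by rw [← inv_pow]; norm_num
  rw [hi]
  have e : Real.pi * (5 * (((-(N + 1 : ℕ) : ℤ)) : ℝ) + 1) / 5 = -(Real.pi * (5 * N + 4 : ℕ) / 5) := by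
    push_cast; ring
  rw [e, Real.sinh_neg]
  have e2 : (5 * (((-(N + 1 : ℕ) : ℤ)) : ℝ) + 1) = -(5 * N + 4 : ℕ) := by push_cast; ring
  rw [e2]
  have hs : Real.sinh (Real.pi * (5 * N + 4 : ℕ) / 5) ≠ 0 :=
    (Real.sinh_pos_iff.2 (by positivity)).ne'
  have hk : ((5 * N + 4 : ℕ) : ℝ) ≠ 0 := by positivity
  have : (-1 : ℝ) ^ (5 * N + 4 + 1) = (-1) ^ (N + 1) := by
    rw [show 5 * N + 4 + 1 = 2 * (2 * N + 2) + (N + 1) by ring, pow_add, pow_mul]; norm_num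
  rw [this]
  field_simp

lemma lamb_finite_sum (N : ℕ) : ∑ n ∈ Finset.Ioo (-((N + 1 : ℕ) : ℤ)) ((N + 1 : ℕ) : ℤ), lh n =
    ∑ k ∈ Finset.range (5 * N + 2), lg k := by
  induction N with
  | zero =>
    have : Finset.Ioo (-((0 + 1 : ℕ) : ℤ)) ((0 + 1 : ℕ) : ℤ) = {0} := by decide
    rw [this, Finset.sum_singleton, Finset.sum_range_succ, Finset.sum_range_succ, Finset.sum_range_zero]
    simp [lh, lg, lc_vals.2.1]
    field_simp
  | succ N ih =>
    have : Finset.Ioo (-((N + 1 + 1 : ℕ) : ℤ)) ((N + 1 + 1 : ℕ) : ℤ) =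
        insert (-((N + 1 : ℕ) : ℤ)) (insert ((N + 1 : ℕ) : ℤ)
          (Finset.Ioo (-((N + 1 : ℕ) : ℤ)) ((N + 1 : ℕ) : ℤ))) := by
      ext x; simp only [Finset.mem_Ioo, Finset.mem_insert]; push_cast; omega
    rw [this, Finset.sum_insert (by simp only [Finset.mem_Ioo, Finset.mem_insert]; push_cast; omega),
      Finset.sum_insert (by simp), ih, show 5 * (N + 1) + 2 = 5 * N + 2 + 1 + 1 + 1 + 1 + 1 by ring]
    simp only [Finset.sum_range_succ _ (5 * N + 2), Finset.sum_range_succ _ (5 * N + 2 + 1),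
      Finset.sum_range_succ _ (5 * N + 2 + 1 + 1), Finset.sum_range_succ _ (5 * N + 2 + 1 + 1 + 1),
      Finset.sum_range_succ _ (5 * N + 2 + 1 + 1 + 1 + 1)]
    rw [show 5 * N + 2 + 1 = 5 * N + 3 by ring, show 5 * N + 3 + 1 = 5 * N + 4 by ring,
      show 5 * N + 4 + 1 = 5 * (N + 1) + 0 by ring,
      show 5 * (N + 1) + 0 + 1 = 5 * N + 6 by ring,
      lg_zero lc_vals.2.2.1, lg_zero lc_vals.2.2.2.1, lg_zero lc_vals.1, lg_up, lg_down]
    ring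

lemma lh_eq (n : ℤ) :
    ∑' m : ℤ, (-1 : ℝ) ^ (m + n) / ((5 * (m : ℝ)) ^ 2 + (5 * (n : ℝ) + 1) ^ 2) = lh n := by
  have ha : (5 * (n : ℝ) + 1) ≠ 0 := by
    have : (5 * n + 1 : ℤ) ≠ 0 := by omega
    exact_mod_cast this
  have h := (lamb_inner ha).mul_left ((-1 : ℝ) ^ n)
  rw [lh, ← h.tsum_eq]
  refine tsum_congr fun m => ?_
  rw [zpow_add₀ (by norm_num)]; ring

end Final

/-- `∑∑ (-1)^{m+n}/((5m)² + (5n+1)²)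
  = -(π/(5√5)) log(√5 + 1 - √(5 + 2√5)) + (π/25) log(11 + 5√5)`. -/
theorem lamb_formula :
    Tendsto (fun N : ℕ => ∑ n ∈ Finset.Ioo (-(N : ℤ)) (N : ℤ),
        ∑' m : ℤ, (-1 : ℝ) ^ (m + n) / ((5 * (m : ℝ)) ^ 2 + (5 * (n : ℝ) + 1) ^ 2))
      atTop
      (nhds (-(Real.pi / (5 * Real.sqrt 5)) *
          Real.log (Real.sqrt 5 + 1 - Real.sqrt (5 + 2 * Real.sqrt 5))
        + Real.pi / 25 * Real.log (11 + 5 * Real.sqrt 5))) := by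
  rw [← tendsto_add_atTop_iff_nat 1]
  have h := lg_hasSum.tendsto_sum_nat
  have ht : Tendsto (fun N : ℕ => 5 * N + 2) atTop atTop :=
    tendsto_atTop_mono (fun N => by simp only [id]; omega) tendsto_id
  refine (h.comp ht).congr fun N => ?_
  simp only [Function.comp_apply, lh_eq]
  exact (lamb_finite_sum N).symm
end

section
/- lim_{N→∞} Σ_{n=−N+1}^{N−1} Σ_{m∈ℤ} (−1)^{m+n} / (m² + (3n+1)²) = (2π/9) · log( 2(√3 − 1) ). -/
open Filter

/-- partial products `∏_{n<N} (1 - p^(n+1))` -/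
noncomputable def fE (p : ℝ) (N : ℕ) : ℝ := ∏ n ∈ Finset.range N, (1 - p ^ (n + 1))

/-- reciprocal of `fE`, extended by zero to negative integers -/
noncomputable def fG (p : ℝ) (n : ℤ) : ℝ := if 0 ≤ n then (fE p n.toNat)⁻¹ else 0

lemma fE_pos {p : ℝ} (h0 : 0 < p) (h1 : p < 1) (N : ℕ) : 0 < fE p N := by
  unfold fE
  refine Finset.prod_pos fun n _ => ?_
  have := pow_lt_one₀ h0.le h1 (Nat.succ_ne_zero n)
  simp at this
  linarith

lemma fE_le_one {p : ℝ} (h0 : 0 < p) (h1 : p < 1) (N : ℕ) : fE p N ≤ 1 := by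
  unfold fE
  refine Finset.prod_le_one (fun n _ => ?_) fun n _ => ?_
  · have := pow_le_one₀ h0.le h1.le (n := n+1)
    linarith
  · have := pow_pos h0 (n+1)
    linarith

lemma fE_tendsto {p : ℝ} (h0 : 0 < p) (h1 : p < 1) :
    ∃ L : ℝ, 0 < L ∧ Tendsto (fE p) atTop (nhds L) := by
  have hs : Summable (fun n : ℕ => ‖-(p ^ (n+1))‖) := by
    have := (summable_nat_add_iff 1).2 (summable_geometric_of_lt_one h0.le h1)
    simpa [abs_of_pos h0] using this
  have hm := (multipliable_one_add_of_summable hs).hasProd.tendsto_prod_nat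
  have hne : ∏' n : ℕ, (1 + -(p ^ (n+1))) ≠ 0 := by
    refine tprod_one_add_ne_zero_of_summable (fun n => ?_) hs
    have := pow_lt_one₀ h0.le h1 (Nat.succ_ne_zero n)
    simp at this
    intro h
    linarith
  have ht : Tendsto (fE p) atTop (nhds (∏' n : ℕ, (1 + -(p ^ (n+1))))) := by
    refine hm.congr fun N => ?_
    simp [fE, sub_eq_add_neg]
  refine ⟨_, lt_of_le_of_ne ?_ hne.symm, ht⟩
  exact ge_of_tendsto' ht fun N => (fE_pos h0 h1 N).le

lemma fG_rec {p : ℝ} (h0 : 0 < p) (h1 : p < 1) (n : ℤ) :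
    fG p n = (1 - p ^ (n + 1)) * fG p (n + 1) := by
  unfold fG
  rcases lt_trichotomy n (-1) with h | h | h
  · rw [if_neg (by omega), if_neg (by omega)]; simp
  · subst h; simp
  · rw [if_pos (by omega), if_pos (by omega)]
    obtain ⟨k, rfl⟩ := Int.eq_ofNat_of_zero_le (show 0 ≤ n by omega)
    have h2 : ((k : ℤ) + 1).toNat = k + 1 := by omega
    have h3 := (fE_pos h0 h1 (k+1)).ne'
    have h4 := (fE_pos h0 h1 k).ne'
    have h5 : fE p (k+1) = fE p k * (1 - p ^ (k+1)) := by
      unfold fE; rw [Finset.prod_range_succ]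
    have h6 : p ^ ((k:ℤ) + 1) = p ^ (k+1) := by exact_mod_cast zpow_natCast p (k+1)
    rw [h2, h6, Int.toNat_natCast, h5]
    rw [h5] at h3
    have h7 := right_ne_zero_of_mul h3
    field_simp

lemma fG_tendsto {p L : ℝ} (hL : 0 < L) (ht : Tendsto (fE p) atTop (nhds L)) :
    Tendsto (fG p) atTop (nhds L⁻¹) := by
  have h1 : Tendsto (fun n : ℤ => (fE p n.toNat)⁻¹) atTop (nhds L⁻¹) :=
    (ht.inv₀ hL.ne').comp (tendsto_atTop.2 fun b => by
      filter_upwards [eventually_ge_atTop (b:ℤ)] with n hn; omega)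
  refine h1.congr' ?_
  filter_upwards [eventually_ge_atTop (0:ℤ)] with n hn
  simp [fG, hn]

lemma fG_bdd {p : ℝ} (h0 : 0 < p) (h1 : p < 1) : ∃ C : ℝ, 0 ≤ C ∧ ∀ n, |fG p n| ≤ C := by
  obtain ⟨L, hL, ht⟩ := fE_tendsto h0 h1
  have := (ht.inv₀ hL.ne').bddAbove_range
  obtain ⟨C, hC⟩ := this
  have hC' : ∀ n, (fE p n)⁻¹ ≤ C := fun n => hC ⟨n, rfl⟩
  have hC0 : 0 ≤ C := le_trans (inv_pos.2 (fE_pos h0 h1 0)).le (hC' 0)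
  refine ⟨C, hC0, fun n => ?_⟩
  unfold fG
  split_ifs
  · rw [abs_of_pos (inv_pos.2 (fE_pos h0 h1 _))]; exact hC' _
  · simpa using hC0

/-- finite Jacobi triple product -/
lemma finite_triple {q z : ℝ} (h0 : 0 < q) (h1 : q < 1) (hz : z ≠ 0) (N : ℕ) :
    HasSum (fun k : ℤ => fE (q^2) (2 * N) * fG (q^2) (N - k) * fG (q^2) (N + k)
      * (z ^ k * q ^ (k^2)))
      (∏ j ∈ Finset.range N, (1 + z * q ^ (2*j+1)) * (1 + z⁻¹ * q ^ (2*j+1))) := by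
  have hp0 : 0 < q^2 := by positivity
  have hp1 : q^2 < 1 := by nlinarith
  induction N with
  | zero =>
    have := hasSum_single (f := fun k : ℤ => fE (q^2) (2 * (0:ℕ)) * fG (q^2) ((0:ℕ) - k) * fG (q^2) ((0:ℕ) + k)
      * (z ^ k * q ^ (k^2))) 0 (by
        intro k hk
        rcases lt_or_gt_of_ne hk with h | h
        · simp [fG, h]
        · have : ¬ (k ≤ 0) := by omega
          simp [fG, this])
    simpa [fG, fE] using this
  | succ N ih =>
    rw [Finset.prod_range_succ]
    set S := ∏ j ∈ Finset.range N, (1 + z * q ^ (2*j+1)) * (1 + z⁻¹ * q ^ (2*j+1)) with hS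
    have e1 := ih.mul_right (1 + q^(4*N+2))
    have e2 := ((Equiv.subRight (1:ℤ)).hasSum_iff.2 ih).mul_right (z * q^(2*N+1))
    have e3 := ((Equiv.addRight (1:ℤ)).hasSum_iff.2 ih).mul_right (z⁻¹ * q^(2*N+1))
    have e := (e1.add e2).add e3
    have hval : S * ((1 + z * q ^ (2 * N + 1)) * (1 + z⁻¹ * q ^ (2 * N + 1))) =
        S * (1 + q ^ (4 * N + 2)) + S * (z * q ^ (2 * N + 1)) + S * (z⁻¹ * q ^ (2 * N + 1)) := by
      have : q^(4*N+2) = q^(2*N+1) * q^(2*N+1) := by ring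
      rw [this]
      field_simp
      ring
    rw [hval]
    refine Eq.mpr (congrArg (fun f => HasSum f _) (funext fun k => ?_)) e
    · simp only [Function.comp, Equiv.subRight_apply, Equiv.coe_addRight]
      have hq : q ≠ 0 := h0.ne'
      have A1 : fG (q^2) ((N:ℤ) - k) = (1 - (q^2) ^ ((N:ℤ) - k + 1)) * fG (q^2) ((N:ℤ) - k + 1) := fG_rec hp0 hp1 _
      have A2 : fG (q^2) ((N:ℤ) + k) = (1 - (q^2) ^ ((N:ℤ) + k + 1)) * fG (q^2) ((N:ℤ) + k + 1) := fG_rec hp0 hp1 _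
      have A3 : fG (q^2) ((N:ℤ) - (k+1)) = (1 - (q^2) ^ ((N:ℤ) - k)) * fG (q^2) ((N:ℤ) - k) := by
        have := fG_rec hp0 hp1 ((N:ℤ) - (k+1))
        rwa [show (N:ℤ) - (k+1) + 1 = N - k by ring] at this
      have A4 : fG (q^2) ((N:ℤ) + (k-1)) = (1 - (q^2) ^ ((N:ℤ) + k)) * fG (q^2) ((N:ℤ) + k) := by
        have := fG_rec hp0 hp1 ((N:ℤ) + (k-1))
        rwa [show (N:ℤ) + (k-1) + 1 = N + k by ring] at this
      have A5 : fE (q^2) (2*(N+1)) = fE (q^2) (2*N) * (1 - (q^2)^(2*N+1)) * (1 - (q^2)^(2*N+2)) := by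
        rw [show 2*(N+1) = 2*N+1+1 by ring]
        unfold fE
        rw [Finset.prod_range_succ, Finset.prod_range_succ]
      rw [A3, A4, A1, A2, A5]
      rw [show ((N+1:ℕ):ℤ) - k = (N:ℤ) - k + 1 by push_cast; ring,
        show ((N+1:ℕ):ℤ) + k = (N:ℤ) + k + 1 by push_cast; ring,
        show (N:ℤ) - (k-1) = (N:ℤ) - k + 1 by ring,
        show (N:ℤ) + (k+1) = (N:ℤ) + k + 1 by ring]
      generalize fG (q^2) ((N:ℤ) - k + 1) = U
      generalize fG (q^2) ((N:ℤ) + k + 1) = V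
      generalize fE (q^2) (2*N) = E
      have hk1 : q ^ ((k-1)^2) = q ^ (k^2) * (q^k)⁻¹ * (q^k)⁻¹ * q := by
        rw [show (k-1)^2 = k^2 - k - k + 1 by ring, zpow_add₀ hq, zpow_sub₀ hq, zpow_sub₀ hq]
        simp [div_eq_mul_inv]
      have hk2 : q ^ ((k+1)^2) = q ^ (k^2) * (q^k) * (q^k) * q := by
        rw [show (k+1)^2 = k^2 + k + k + 1 by ring, zpow_add₀ hq, zpow_add₀ hq, zpow_add₀ hq]
        simp
      have hz1 : z ^ (k-1) = z^k * z⁻¹ := by rw [zpow_sub_one₀ hz]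
      have hz2 : z ^ (k+1) = z^k * z := by rw [zpow_add_one₀ hz]
      have hX : (q^2) ^ ((N:ℤ) - k) = q^(2*N) * (q^k)⁻¹ * (q^k)⁻¹ := by
        rw [zpow_sub₀ hp0.ne', zpow_natCast, ← pow_mul, pow_two, mul_zpow]
        field_simp
      have hY : (q^2) ^ ((N:ℤ) + k) = q^(2*N) * (q^k) * (q^k) := by
        rw [zpow_add₀ hp0.ne', zpow_natCast, ← pow_mul, pow_two, mul_zpow]
        ring
      have hQ1 : q^(4*N+2) = q^(2*N) * q^(2*N) * q^2 := by ring
      have hQ2 : (q^2)^(2*N+1) = q^(2*N) * q^(2*N) * q^2 := by ring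
      have hQ3 : (q^2)^(2*N+2) = q^(2*N) * q^(2*N) * q^4 := by ring
      have hQ4 : q^(2*N+1) = q^(2*N) * q := by ring
      rw [zpow_add_one₀ hp0.ne', zpow_add_one₀ hp0.ne', hX, hY, hk1, hk2, hz1, hz2, hQ1, hQ2, hQ3, hQ4]
      have hqk : q^k ≠ 0 := zpow_ne_zero _ hq
      generalize q^k = x at *
      generalize q^(2*N) = y at *
      generalize q^(k^2) = w at *
      generalize z^k = v at *
      field_simp
      ring

lemma summable_gauss {q : ℝ} (h0 : 0 < q) (h1 : q < 1) (b : ℤ) :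
    Summable (fun k : ℤ => q ^ (k^2 + b * k)) := by
  have hy : 0 < - Real.log q / Real.pi := div_pos (neg_pos.2 (Real.log_neg h0 h1)) Real.pi_pos
  have := (summable_jacobiTheta₂_term_iff ((- Real.log q / Real.pi * b / 2 : ℝ) * Complex.I)
    ((- Real.log q / Real.pi : ℝ) * Complex.I)).2 (by simpa using hy)
  refine this.norm.congr fun k => ?_
  rw [norm_jacobiTheta₂_term, ← Real.rpow_intCast, Real.rpow_def_of_pos h0]
  congr 1
  have := Real.pi_ne_zero
  simp
  field_simp
  ring

lemma triple_limit {q z L : ℝ} (h0 : 0 < q) (h1 : q < 1) (hz : z ≠ 0)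
    (hL : 0 < L) (ht : Tendsto (fE (q^2)) atTop (nhds L))
    (hs : Summable (fun k : ℤ => |z ^ k * q ^ (k^2)|)) :
    Tendsto (fun N : ℕ => ∏ j ∈ Finset.range N, (1 + z * q ^ (2*j+1)) * (1 + z⁻¹ * q ^ (2*j+1)))
      atTop (nhds ((∑' k : ℤ, z ^ k * q ^ (k^2)) / L)) := by
  have hp0 : 0 < q^2 := by positivity
  have hp1 : q^2 < 1 := by nlinarith
  obtain ⟨C, hC0, hC⟩ := fG_bdd hp0 hp1
  have key := tendsto_tsum_of_dominated_convergence (𝓕 := atTop)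
    (f := fun (N : ℕ) (k : ℤ) => fE (q^2) (2 * N) * fG (q^2) (N - k) * fG (q^2) (N + k)
      * (z ^ k * q ^ (k^2)))
    (g := fun k : ℤ => L * L⁻¹ * L⁻¹ * (z ^ k * q ^ (k^2)))
    (bound := fun k : ℤ => 1 * C * C * |z ^ k * q ^ (k^2)|)
    (hs.mul_left _)
    (by
      intro k
      have hg := fG_tendsto hL ht
      have a1 : Tendsto (fun N : ℕ => (2 * N : ℕ)) atTop atTop :=
        tendsto_atTop.2 fun b => by
          filter_upwards [eventually_ge_atTop b] with n hn; omega
      have a2 : Tendsto (fun N : ℕ => (N : ℤ) - k) atTop atTop :=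
        tendsto_atTop.2 fun b => by
          filter_upwards [eventually_ge_atTop (b + k).toNat] with n hn; omega
      have a3 : Tendsto (fun N : ℕ => (N : ℤ) + k) atTop atTop :=
        tendsto_atTop.2 fun b => by
          filter_upwards [eventually_ge_atTop (b - k).toNat] with n hn; omega
      exact ((((ht.comp a1).mul (hg.comp a2)).mul (hg.comp a3)).mul_const _))
    (by
      refine Eventually.of_forall fun N k => ?_
      rw [Real.norm_eq_abs, abs_mul, abs_mul, abs_mul]
      have h3 : |fE (q^2) (2*N)| ≤ 1 := by
        rw [abs_of_pos (fE_pos hp0 hp1 _)]; exact fE_le_one hp0 hp1 _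
      have := hC (N - k)
      have := hC (N + k)
      gcongr)
  rw [tsum_mul_left] at key
  have e : L * L⁻¹ * L⁻¹ * ∑' k : ℤ, z ^ k * q ^ (k^2) = (∑' k : ℤ, z ^ k * q ^ (k^2)) / L := by
    field_simp
  rw [e] at key
  refine key.congr fun N => ?_
  exact (finite_triple h0 h1 hz N).tsum_eq

noncomputable def th3 (q : ℝ) : ℝ := ∑' k : ℤ, q ^ (k^2)
noncomputable def th4 (q : ℝ) : ℝ := ∑' k : ℤ, (-1) ^ k * q ^ (k^2)
noncomputable def psi (q : ℝ) : ℝ := ∑' k : ℤ, q ^ (k^2 + k)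

lemma summable3 {q : ℝ} (h0 : 0 < q) (h1 : q < 1) : Summable (fun k : ℤ => q ^ (k^2)) := by
  simpa using summable_gauss h0 h1 0

lemma summable2 {q : ℝ} (h0 : 0 < q) (h1 : q < 1) : Summable (fun k : ℤ => q ^ (k^2 + k)) := by
  simpa using summable_gauss h0 h1 1

lemma abs_sgn (k : ℤ) : |(-1 : ℝ) ^ k| = 1 := by
  rw [abs_zpow]; simp

lemma summable4 {q : ℝ} (h0 : 0 < q) (h1 : q < 1) :
    Summable (fun k : ℤ => (-1 : ℝ) ^ k * q ^ (k^2)) := by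
  refine Summable.of_abs ((summable3 h0 h1).congr fun k => ?_)
  rw [abs_mul, abs_sgn, one_mul, abs_of_pos (zpow_pos h0 _)]

/-- product formula at the level we need -/
lemma weber_product {q P : ℝ} (h0 : 0 < q) (h1 : q < 1)
    (hP : Tendsto (fun N : ℕ => ∏ j ∈ Finset.range N, (1 + q ^ (2*j+1))) atTop (nhds P)) :
    P ^ 6 * (th4 q * psi q) = 2 * th3 q ^ 2 ∧ 0 < th3 q ∧ 0 < th4 q ∧ 0 < psi q := by
  have hp0 : 0 < q^2 := by positivity
  have hp1 : q^2 < 1 := by nlinarith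
  obtain ⟨L, hL, ht⟩ := fE_tendsto hp0 hp1
  have T3 := triple_limit h0 h1 (one_ne_zero) hL ht
    ((summable3 h0 h1).abs.congr fun k => by simp)
  have T4 := triple_limit (z := -1) h0 h1 (by norm_num) hL ht
    ((summable4 h0 h1).abs)
  have hpsi : (fun k : ℤ => q ^ k * q ^ (k^2)) = fun k : ℤ => q ^ (k^2+k) := by
    funext k; rw [← zpow_add₀ h0.ne', add_comm]
  have T2 := triple_limit (z := q) h0 h1 h0.ne' hL ht
    ((summable2 h0 h1).abs.congr fun k => by rw [← congrFun hpsi k])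
  rw [hpsi] at T2
  simp only [one_zpow, one_mul, inv_one] at T3
  change Tendsto _ _ (nhds (th3 q / L)) at T3
  change Tendsto _ _ (nhds (th4 q / L)) at T4
  change Tendsto _ _ (nhds (psi q / L)) at T2
  have hP2 : P ^ 2 = th3 q / L := by
    refine tendsto_nhds_unique (hP.pow 2) (T3.congr fun N => ?_)
    rw [Finset.prod_mul_distrib]; ring
  have a1 : Tendsto (fun N : ℕ => (2 * N : ℕ)) atTop atTop :=
    tendsto_atTop.2 fun b => by
      filter_upwards [eventually_ge_atTop b] with n hn; omega
  have hqN : Tendsto (fun N : ℕ => q ^ (2*N)) atTop (nhds 0) :=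
    (tendsto_pow_atTop_nhds_zero_of_lt_one h0.le h1).comp a1
  have hprod : th3 q / L * (th4 q / L) * (psi q / L * (1 + 0)) = 2 * (L / L) ^ 2 := by
    refine tendsto_nhds_unique ((T3.mul T4).mul (T2.mul (hqN.const_add 1)))
      (((((ht.comp a1).div ht hL.ne').pow 2).const_mul 2).congr fun N => ?_)
    change 2 * (fE (q^2) (2*N) / fE (q^2) N)^2 = _
    have hE : ∀ N : ℕ, fE (q^2) (2*N) = fE (q^2) N * (∏ j ∈ Finset.range N, (1 + q ^ (2*j+1)))
        * (∏ j ∈ Finset.range N, (1 - q ^ (2*j+1))) * (∏ j ∈ Finset.range N, (1 + q ^ (2*j+2))) := by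
      intro N
      induction N with
      | zero => simp [fE]
      | succ N ih =>
        rw [show 2*(N+1) = 2*N+1+1 by ring]
        have : fE (q^2) (2*N+1+1) = fE (q^2) (2*N) * (1 - (q^2)^(2*N+1)) * (1 - (q^2)^(2*N+2)) := by
          unfold fE
          rw [Finset.prod_range_succ, Finset.prod_range_succ]
        rw [this, ih]
        have : fE (q^2) (N+1) = fE (q^2) (N) * (1 - (q^2)^(N+1)) := by
          unfold fE
          rw [Finset.prod_range_succ]
        rw [this]
        simp only [Finset.prod_range_succ]
        ring
    have hR : ∀ N : ℕ, (∏ j ∈ Finset.range N, (1 + q⁻¹ * q ^ (2*j+1))) * (1 + q^(2*N))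
        = 2 * ∏ j ∈ Finset.range N, (1 + q ^ (2*j+2)) := by
      intro N
      induction N with
      | zero => norm_num
      | succ N ih =>
        rw [Finset.prod_range_succ, Finset.prod_range_succ]
        have : q⁻¹ * q^(2*N+1) = q^(2*N) := by field_simp; ring
        rw [this]
        linear_combination (1 + q^(2*(N+1))) * ih
    have hR2 : (∏ j ∈ Finset.range N, (1 + q * q ^ (2*j+1))) = ∏ j ∈ Finset.range N, (1 + q ^ (2*j+2)) :=
      Finset.prod_congr rfl fun j _ => by ring
    have hQ : ∏ j ∈ Finset.range N, ((1 + -1 * q ^ (2*j+1)) * (1 + (-1)⁻¹ * q ^ (2*j+1)))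
       = (∏ j ∈ Finset.range N, (1 - q ^ (2*j+1)))^2 := by
      rw [← Finset.prod_pow]
      refine Finset.prod_congr rfl fun j _ => ?_
      norm_num
      ring
    rw [hQ, Finset.prod_mul_distrib, Finset.prod_mul_distrib, hR2, mul_assoc (∏ j ∈ Finset.range N, (1 + q ^ (2*j+2))), hR,
      hE]
    have := (fE_pos hp0 hp1 N).ne'
    field_simp
  have h3 : 0 < th3 q := (summable3 h0 h1).tsum_pos (fun k => (zpow_pos h0 _).le) 0 (zpow_pos h0 _)
  have h2 : 0 < psi q := (summable2 h0 h1).tsum_pos (fun k => (zpow_pos h0 _).le) 0 (zpow_pos h0 _)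
  have hL' := hL.ne'
  have hpr : th3 q * th4 q * psi q = 2 * L^3 := by
    field_simp at hprod
    linarith
  refine ⟨?_, h3, ?_, h2⟩
  · have : P^6 = (th3 q / L)^3 := by rw [← hP2]; ring
    rw [this]
    field_simp
    linear_combination hpr
  · have : 0 < th3 q * th4 q * psi q := by rw [hpr]; positivity
    have h5 := (pos_iff_pos_of_mul_pos this).2 h2
    exact (pos_iff_pos_of_mul_pos h5).1 h3

/-- splitting a double sum over ℤ×ℤ by parity -/
lemma split_parity (F : ℤ × ℤ → ℝ) (hF : Summable F) :
    Summable (fun x : ℤ × ℤ => F (x.1 + x.2, x.1 - x.2)) ∧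
    Summable (fun x : ℤ × ℤ => F (x.1 + x.2 + 1, x.1 - x.2)) ∧
    ∑' x, F x = ∑' x : ℤ × ℤ, F (x.1 + x.2, x.1 - x.2) + ∑' x : ℤ × ℤ, F (x.1 + x.2 + 1, x.1 - x.2) := by
  let e : (ℤ × ℤ) ⊕ (ℤ × ℤ) → ℤ × ℤ :=
    Sum.elim (fun x => (x.1 + x.2, x.1 - x.2)) (fun x => (x.1 + x.2 + 1, x.1 - x.2))
  have he : Function.Bijective e := by
    constructor
    · rintro (⟨a, b⟩ | ⟨a, b⟩) (⟨c, d⟩ | ⟨c, d⟩) h <;> simp [e] at h ⊢ <;> omega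
    · rintro ⟨m, n⟩
      rcases Int.even_or_odd' (m + n) with ⟨k, hk | hk⟩
      · exact ⟨Sum.inl (k, m - k), by simp [e]; omega⟩
      · exact ⟨Sum.inr (k, m - 1 - k), by simp [e]; omega⟩
  have i1 : Summable (fun x : ℤ × ℤ => F (x.1 + x.2, x.1 - x.2)) :=
    hF.comp_injective (he.1.comp Sum.inl_injective)
  have i2 : Summable (fun x : ℤ × ℤ => F (x.1 + x.2 + 1, x.1 - x.2)) :=
    hF.comp_injective (he.1.comp Sum.inr_injective)
  refine ⟨i1, i2, ?_⟩
  rw [← (Equiv.ofBijective e he).tsum_eq F]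
  exact Summable.tsum_sum (f := fun y => F (e y)) i1 i2

lemma tsum_mul_eq {f g : ℤ → ℝ} (hf : Summable f) (hg : Summable g) :
    Summable (fun x : ℤ × ℤ => f x.1 * g x.2) ∧
      (∑' k, f k) * (∑' k, g k) = ∑' x : ℤ × ℤ, f x.1 * g x.2 :=
  ⟨summable_mul_of_summable_norm hf.norm hg.norm, tsum_mul_tsum_of_summable_norm hf.norm hg.norm⟩

lemma sgn_add_sub (a b : ℤ) : (-1 : ℝ) ^ (a - b) = (-1) ^ a * (-1) ^ b := by
  rw [zpow_sub₀ (by norm_num), div_eq_mul_inv]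
  congr 1
  rw [← inv_zpow]; norm_num

lemma sgn_sq (a : ℤ) : (-1 : ℝ) ^ a * (-1) ^ a = 1 := by
  rw [← mul_zpow]; norm_num

lemma sgn_add (a b : ℤ) : (-1 : ℝ) ^ (a + b) = (-1) ^ a * (-1) ^ b :=
  zpow_add₀ (by norm_num) _ _

lemma jacobi_quartic {q : ℝ} (h0 : 0 < q) (h1 : q < 1) :
    th3 (q^2) ^ 4 = th4 (q^2) ^ 4 + q^2 * psi (q^2) ^ 4 := by
  have hq := h0.ne'
  have hp0 : 0 < q^2 := by positivity
  have hp1 : q^2 < 1 := by nlinarith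
  have A : th3 q * th3 q = th3 (q^2) * th3 (q^2) + q * (psi (q^2) * psi (q^2)) := by
    unfold th3 psi
    obtain ⟨s, e⟩ := tsum_mul_eq (summable3 h0 h1) (summable3 h0 h1)
    rw [e, (split_parity _ s).2.2, (tsum_mul_eq (summable3 hp0 hp1) (summable3 hp0 hp1)).2,
      (tsum_mul_eq (summable2 hp0 hp1) (summable2 hp0 hp1)).2, ← tsum_mul_left]
    congr 1
    · refine tsum_congr fun x => ?_
      rw [← zpow_natCast, ← zpow_mul, ← zpow_mul, ← zpow_add₀ hq, ← zpow_add₀ hq]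
      congr 1; push_cast; ring
    · refine tsum_congr fun x => ?_
      rw [← zpow_natCast, ← zpow_mul, ← zpow_mul, ← zpow_add₀ hq, ← zpow_add₀ hq, ← zpow_one_add₀ hq]
      congr 1; push_cast; ring
  have B : th4 q * th4 q = th3 (q^2) * th3 (q^2) - q * (psi (q^2) * psi (q^2)) := by
    unfold th4 th3 psi
    obtain ⟨s, e⟩ := tsum_mul_eq (summable4 h0 h1) (summable4 h0 h1)
    rw [e, (split_parity _ s).2.2, (tsum_mul_eq (summable3 hp0 hp1) (summable3 hp0 hp1)).2,
      (tsum_mul_eq (summable2 hp0 hp1) (summable2 hp0 hp1)).2, ← tsum_mul_left, sub_eq_add_neg, ← tsum_neg]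
    congr 1
    · refine tsum_congr fun x => ?_
      have : (q^2) ^ (x.1^2) * (q^2)^(x.2^2) = q ^ ((x.1+x.2)^2) * q ^ ((x.1-x.2)^2) := by
        rw [← zpow_natCast, ← zpow_mul, ← zpow_mul, ← zpow_add₀ hq, ← zpow_add₀ hq]
        congr 1; push_cast; ring
      rw [this, sgn_add_sub, sgn_add]
      linear_combination (q ^ ((x.1+x.2)^2) * q ^ ((x.1-x.2)^2)) * ((-1)^x.2 * (-1)^x.2 * sgn_sq x.1 + sgn_sq x.2)
    · refine tsum_congr fun x => ?_
      have : q * ((q^2) ^ (x.1^2+x.1) * (q^2)^(x.2^2+x.2)) = q ^ ((x.1+x.2+1)^2) * q ^ ((x.1-x.2)^2) := by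
        rw [← zpow_natCast, ← zpow_mul, ← zpow_mul, ← zpow_add₀ hq, ← zpow_add₀ hq, ← zpow_one_add₀ hq]
        congr 1; push_cast; ring
      rw [this, sgn_add_sub, sgn_add, sgn_add, zpow_one]
      linear_combination -(q ^ ((x.1+x.2+1)^2) * q ^ ((x.1-x.2)^2)) * ((-1)^x.2 * (-1)^x.2 * sgn_sq x.1 + sgn_sq x.2)
  have C : th3 q * th4 q = th4 (q^2) * th4 (q^2) := by
    have hz : ∑' k : ℤ, (-1 : ℝ) ^ k * (q^2) ^ (k^2 + k) = 0 := by
      have h := (Equiv.subLeft (-1 : ℤ)).tsum_eq (fun k : ℤ => (-1 : ℝ) ^ k * (q^2) ^ (k^2 + k))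
      have h2 : ∀ k : ℤ, (-1 : ℝ) ^ (Equiv.subLeft (-1 : ℤ) k) * (q^2) ^ ((Equiv.subLeft (-1 : ℤ) k)^2 + (Equiv.subLeft (-1 : ℤ) k))
         = - ((-1 : ℝ) ^ k * (q^2) ^ (k^2 + k)) := by
        intro k
        simp only [Equiv.subLeft_apply]
        rw [sgn_add_sub, show (-1 - k)^2 + (-1 - k) = k^2 + k by ring]
        norm_num
      rw [tsum_congr h2, tsum_neg] at h
      linarith
    have hs : Summable (fun k : ℤ => (-1 : ℝ) ^ k * (q^2) ^ (k^2 + k)) := by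
      refine Summable.of_abs ((summable2 hp0 hp1).congr fun k => ?_)
      rw [abs_mul, abs_sgn, one_mul, abs_of_pos (zpow_pos hp0 _)]
    have hz2 := (tsum_mul_eq hs hs).2
    rw [hz, mul_zero] at hz2
    unfold th4 th3
    obtain ⟨s, e⟩ := tsum_mul_eq (summable3 h0 h1) (summable4 h0 h1)
    rw [e, (split_parity _ s).2.2, (tsum_mul_eq (summable4 hp0 hp1) (summable4 hp0 hp1)).2,
      ← add_zero (∑' x : ℤ × ℤ, (-1 : ℝ) ^ x.1 * (q^2) ^ (x.1^2) * ((-1) ^ x.2 * (q^2) ^ (x.2^2))),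
      ← mul_zero q, hz2, ← tsum_mul_left]
    congr 1
    · refine tsum_congr fun x => ?_
      have : (q^2) ^ (x.1^2) * (q^2)^(x.2^2) = q ^ ((x.1+x.2)^2) * q ^ ((x.1-x.2)^2) := by
        rw [← zpow_natCast, ← zpow_mul, ← zpow_mul, ← zpow_add₀ hq, ← zpow_add₀ hq]
        congr 1; push_cast; ring
      rw [sgn_add_sub]
      linear_combination -(-1)^x.1 * (-1)^x.2 * this
    · refine tsum_congr fun x => ?_
      have : q * ((q^2) ^ (x.1^2+x.1) * (q^2)^(x.2^2+x.2)) = q ^ ((x.1+x.2+1)^2) * q ^ ((x.1-x.2)^2) := by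
        rw [← zpow_natCast, ← zpow_mul, ← zpow_mul, ← zpow_add₀ hq, ← zpow_add₀ hq, ← zpow_one_add₀ hq]
        congr 1; push_cast; ring
      rw [sgn_add_sub]
      linear_combination -(-1)^x.1 * (-1)^x.2 * this
  have D : (th3 q * th3 q) * (th4 q * th4 q) = (th4 (q^2) * th4 (q^2))^2 := by rw [← C]; ring
  rw [A, B] at D
  linear_combination D

lemma cubic_modular {q : ℝ} (h0 : 0 < q) (h1 : q < 1) :
    th3 q * th3 (q^3) = th4 q * th4 (q^3) + q * (psi q * psi (q^3)) := by
  have hq := h0.ne'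
  have hp0 : 0 < q^3 := by positivity
  have hp1 : q^3 < 1 := pow_lt_one₀ h0.le h1 (by norm_num)
  have h3 : ∀ k : ℤ, (q^3) ^ k = q ^ (3 * k) := fun k => by
    rw [← zpow_natCast, ← zpow_mul]; norm_num
  unfold th3 th4 psi
  obtain ⟨s3, e3⟩ := tsum_mul_eq (summable3 h0 h1) (summable3 hp0 hp1)
  obtain ⟨s4, e4⟩ := tsum_mul_eq (summable4 h0 h1) (summable4 hp0 hp1)
  obtain ⟨s2, e2⟩ := tsum_mul_eq (summable2 h0 h1) (summable2 hp0 hp1)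
  rw [e3, e4, e2, (split_parity _ s3).2.2, (split_parity _ s4).2.2, (split_parity _ s2).2.2]
  set O := ∑' x : ℤ × ℤ, q ^ ((x.1+x.2+1)^2) * (q^3) ^ ((x.1-x.2)^2) with hO
  have a1 : ∑' x : ℤ × ℤ, (-1 : ℝ) ^ (x.1+x.2) * q ^ ((x.1+x.2)^2) * ((-1) ^ (x.1-x.2) * (q^3) ^ ((x.1-x.2)^2))
     = ∑' x : ℤ × ℤ, q ^ ((x.1+x.2)^2) * (q^3) ^ ((x.1-x.2)^2) := by
    refine tsum_congr fun x => ?_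
    rw [sgn_add_sub, sgn_add]
    linear_combination (q ^ ((x.1+x.2)^2) * (q^3) ^ ((x.1-x.2)^2)) * ((-1)^x.2 * (-1)^x.2 * sgn_sq x.1 + sgn_sq x.2)
  have a2 : ∑' x : ℤ × ℤ, (-1 : ℝ) ^ (x.1+x.2+1) * q ^ ((x.1+x.2+1)^2) * ((-1) ^ (x.1-x.2) * (q^3) ^ ((x.1-x.2)^2))
     = - O := by
    rw [hO, ← tsum_neg]
    refine tsum_congr fun x => ?_
    rw [sgn_add_sub, sgn_add, sgn_add, zpow_one]
    linear_combination -(q ^ ((x.1+x.2+1)^2) * (q^3) ^ ((x.1-x.2)^2)) * ((-1)^x.2 * (-1)^x.2 * sgn_sq x.1 + sgn_sq x.2)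
  have a3 : q * ∑' x : ℤ × ℤ, q ^ ((x.1+x.2)^2+(x.1+x.2)) * (q^3) ^ ((x.1-x.2)^2+(x.1-x.2)) = O := by
    let e : ℤ × ℤ ≃ ℤ × ℤ := ⟨fun x => (x.1, x.1 - x.2), fun x => (x.1, x.1 - x.2),
      fun x => by simp, fun x => by simp⟩
    rw [← e.tsum_eq, ← tsum_mul_left]
    refine tsum_congr fun x => ?_
    simp only [e, Equiv.coe_fn_mk]
    rw [h3, h3, ← zpow_add₀ hq, ← zpow_add₀ hq, ← zpow_one_add₀ hq]
    congr 1; ring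
  have a4 : q * ∑' x : ℤ × ℤ, q ^ ((x.1+x.2+1)^2+(x.1+x.2+1)) * (q^3) ^ ((x.1-x.2)^2+(x.1-x.2)) = O := by
    let e : ℤ × ℤ ≃ ℤ × ℤ := ⟨fun x => (x.1 - x.2 - 1, x.1), fun x => (x.2, x.2 - x.1 - 1),
      fun x => by ext <;> simp <;> ring, fun x => by ext <;> simp <;> ring⟩
    rw [← e.tsum_eq, ← tsum_mul_left]
    refine tsum_congr fun x => ?_
    simp only [e, Equiv.coe_fn_mk]
    rw [h3, h3, ← zpow_add₀ hq, ← zpow_add₀ hq, ← zpow_one_add₀ hq]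
    congr 1; ring
  simp only [] at *
  rw [a1, a2, mul_add, a3, a4]
  ring

lemma theta_S : th4 (Real.exp (-Real.pi)) = Real.exp (-Real.pi/4) * psi (Real.exp (-Real.pi)) := by
  have h := jacobiTheta₂_functional_equation (1/2) Complex.I
  have hI : (-Complex.I * Complex.I) = 1 := by simp
  rw [hI, Complex.one_cpow, jacobiTheta₂, jacobiTheta₂] at h
  have e1 : (th4 (Real.exp (-Real.pi)) : ℂ) = ∑' n : ℤ, jacobiTheta₂_term n (1/2) Complex.I := by
    rw [th4, Complex.ofReal_tsum]
    refine tsum_congr fun n => ?_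
    rw [jacobiTheta₂_term, Complex.exp_add]
    push_cast
    congr 1
    · rw [← Complex.exp_pi_mul_I, ← Complex.exp_int_mul]
      congr 1; ring
    · rw [← Complex.exp_int_mul]
      congr 1
      push_cast
      linear_combination (-Real.pi * n^2 : ℂ) * Complex.I_sq
  have e2 : ((Real.exp (-Real.pi/4) * psi (Real.exp (-Real.pi)) : ℝ) : ℂ) =
      1 / 1 * Complex.exp (-Real.pi * Complex.I * (1/2)^2 / Complex.I) *
        ∑' n : ℤ, jacobiTheta₂_term n (1/2 / Complex.I) (-1 / Complex.I) := by
    rw [psi]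
    push_cast
    congr 1
    · rw [one_div_one, one_mul]; congr 1
      field_simp [Complex.I_ne_zero]
      try ring
    · rw [← (Equiv.neg ℤ).tsum_eq (fun n : ℤ => jacobiTheta₂_term n (1/2 / Complex.I) (-1 / Complex.I))]
      refine tsum_congr fun n => ?_
      rw [jacobiTheta₂_term, ← Complex.exp_int_mul]
      congr 1
      have := Complex.I_ne_zero
      push_cast
      simp only [Equiv.neg_apply]
      push_cast
      field_simp
      try ring
  have := e1.trans (h.trans e2.symm)
  exact_mod_cast this

lemma lambert {y : ℝ} (hy : 0 < y) : ∃ P : ℝ, 0 < P ∧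
    Tendsto (fun N : ℕ => ∏ j ∈ Finset.range N, (1 + Real.exp (-Real.pi * y) ^ (2*j+1))) atTop (nhds P) ∧
    HasSum (fun i : ℕ => (-1 : ℝ) ^ i / ((i + 1 : ℝ) * Real.sinh (Real.pi * (i + 1) * y))) (2 * Real.log P) := by
  set q := Real.exp (-Real.pi * y) with hq
  have h0 : 0 < q := Real.exp_pos _
  have h1 : q < 1 := by
    rw [hq, Real.exp_lt_one_iff]
    have := mul_pos Real.pi_pos hy
    linarith
  let f : ℕ × ℕ → ℝ := fun x => (-1) ^ x.2 * q ^ ((2 * x.1 + 1) * (x.2 + 1)) / (x.2 + 1)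
  have hg := summable_geometric_of_lt_one h0.le h1
  have hf : Summable f := by
    refine Summable.of_norm_bounded (g := fun x : ℕ × ℕ => q ^ x.1 * q ^ x.2)
      (hg.mul_of_nonneg hg (fun n => by positivity) (fun n => by positivity)) ?_
    rintro ⟨j, i⟩
    simp only [f]
    rw [norm_div, norm_mul, norm_pow, norm_neg, norm_one, one_pow, one_mul, Real.norm_of_nonneg (by positivity),
      Real.norm_of_nonneg (by positivity), ← pow_add]
    refine (div_le_self (by positivity) (by linarith [Nat.cast_nonneg (α := ℝ) i])).trans ?_
    exact pow_le_pow_of_le_one h0.le h1.le (by nlinarith [Nat.zero_le (j*i)])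
  have r1 : ∀ j : ℕ, HasSum (fun i => f (j, i)) (Real.log (1 + q ^ (2*j+1))) := by
    intro j
    have hx0 : 0 < q ^ (2*j+1) := by positivity
    have hx1 : q ^ (2*j+1) < 1 := pow_lt_one₀ h0.le h1 (by omega)
    have := (Real.hasSum_pow_div_log_of_abs_lt_one (x := -q^(2*j+1)) (by rw [abs_neg, abs_of_pos hx0]; exact hx1)).neg
    rw [neg_neg, sub_neg_eq_add] at this
    refine Eq.mpr (congrArg (fun f => HasSum f _) (funext fun i => ?_)) this
    simp only [f]
    rw [neg_pow (q^(2*j+1)), pow_mul, pow_succ (-1 : ℝ) i]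
    ring
  have r2 : ∀ i : ℕ, HasSum (fun j => f (j, i)) ((-1 : ℝ) ^ i / ((i + 1 : ℝ) * Real.sinh (Real.pi * (i + 1) * y)) / 2) := by
    intro i
    have hx0 : 0 < q ^ (i+1) := by positivity
    have hx1 : q ^ (i+1) < 1 := pow_lt_one₀ h0.le h1 (by omega)
    have hx2 : (q ^ (i+1))^2 < 1 := pow_lt_one₀ hx0.le hx1 (by omega)
    have := (hasSum_geometric_of_lt_one (r := (q^(i+1))^2) (by positivity) hx2).mul_left
      ((-1)^i * q^(i+1) / (i+1))
    have hs : Real.sinh (Real.pi * (i + 1) * y) = ((q^(i+1))⁻¹ - q^(i+1)) / 2 := by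
      rw [Real.sinh_eq, hq, ← Real.exp_nat_mul, ← Real.exp_neg]
      push_cast
      congr 3 <;> ring
    have hv : (-1 : ℝ) ^ i / ((i + 1 : ℝ) * Real.sinh (Real.pi * (i + 1) * y)) / 2 =
        ((-1)^i * q^(i+1) / (i+1)) * (1 - (q^(i+1))^2)⁻¹ := by
      rw [hs]
      have : 1 - (q^(i+1))^2 ≠ 0 := by linarith
      have h3 : (q^(i+1))⁻¹ - q^(i+1) = (1 - (q^(i+1))^2) / q^(i+1) := by field_simp
      rw [h3]
      generalize q^(i+1) = x at *
      have : (i + 1 : ℝ) ≠ 0 := by positivity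
      field_simp
    rw [hv]
    refine Eq.mpr (congrArg (fun f => HasSum f _) (funext fun j => ?_)) this
    simp only [f]
    ring
  have S1 := hf.hasSum.prod_fiberwise r1
  have S2 := ((Equiv.prodComm ℕ ℕ).hasSum_iff.2 hf.hasSum).prod_fiberwise r2
  refine ⟨Real.exp (∑' x, f x), Real.exp_pos _, ?_, ?_⟩
  · refine ((Real.continuous_exp.tendsto _).comp S1.tendsto_sum_nat).congr fun N => ?_
    simp only [Function.comp]
    rw [Real.exp_sum]
    exact Finset.prod_congr rfl fun j _ => Real.exp_log (by positivity)
  · rw [Real.log_exp]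
    refine Eq.mpr (congrArg (fun f => HasSum f _) (funext fun j => ?_)) (S2.mul_left 2)
    ring

lemma coth_sum {a : ℝ} (ha : a ≠ 0) :
    HasSum (fun m : ℤ => 1 / ((m : ℝ)^2 + a^2)) (Real.pi * Real.cosh (Real.pi * a) / (a * Real.sinh (Real.pi * a))) := by
  have hs : Real.sinh (Real.pi * a) ≠ 0 := by
    rw [Ne, Real.sinh_eq_zero]; exact mul_ne_zero Real.pi_ne_zero ha
  have hz : (a * Complex.I : ℂ) ∈ Complex.integerComplement := by
    rintro ⟨n, hn⟩
    have := congrArg Complex.im hn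
    simp at this
    exact ha this.symm
  have h1 := (summable_cotTerm hz).hasSum
  have h2 : ∑' n, cotTerm (a * Complex.I : ℂ) n = _ := (cot_series_rep' hz).symm
  rw [h2] at h1
  have h3 := h1.mul_left (Complex.I / (2 * a))
  have haC : (a : ℂ) ≠ 0 := by exact_mod_cast ha
  have hsC : Complex.sinh (Real.pi * a) ≠ 0 := by exact_mod_cast hs
  have hv : Complex.I / (2 * a) * (Real.pi * Complex.cot (Real.pi * (a * Complex.I)) - 1 / (a * Complex.I)) =
     ((Real.pi * Real.cosh (Real.pi * a) / (2 * a * Real.sinh (Real.pi * a)) - 1 / (2 * a^2) : ℝ) : ℂ) := by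
    rw [Complex.cot, ← mul_assoc, Complex.cos_mul_I, Complex.sin_mul_I]
    push_cast
    have := Complex.I_ne_zero
    field_simp
  rw [hv] at h3
  have h4 : HasSum (fun n : ℕ => 1 / (((n:ℝ)+1)^2 + a^2)) (Real.pi * Real.cosh (Real.pi * a) / (2 * a * Real.sinh (Real.pi * a)) - 1 / (2 * a^2)) := by
    rw [← Complex.hasSum_ofReal]
    refine Eq.mpr (congrArg (fun f => HasSum f _) (funext fun n => ?_)) h3
    rw [cotTerm_identity hz]
    have hr : (((n:ℝ)+1)^2 + a^2) ≠ 0 := by positivity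
    have hC : (((n:ℂ)+1)^2 + a^2) ≠ 0 := by exact_mod_cast hr
    have e : ((a * Complex.I + (n + 1)) * (a * Complex.I - (n + 1)) : ℂ) = -(((n:ℂ)+1)^2 + a^2) := by
      linear_combination (a:ℂ)^2 * Complex.I_sq
    rw [e]
    push_cast
    field_simp
    linear_combination Complex.I_sq
  have h5 : HasSum (fun m : ℤ => 1 / ((m : ℝ)^2 + a^2)) _ :=
    HasSum.of_add_one_of_neg_add_one (f := fun m : ℤ => 1 / ((m : ℝ)^2 + a^2))
    (by simpa using h4) (by
      refine Eq.mpr (congrArg (fun f => HasSum f _) (funext fun n => ?_)) h4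
      push_cast
      congr 2; ring)
  convert! h5 using 1
  simp
  field_simp
  ring

lemma csch_sum {a : ℝ} (ha : a ≠ 0) :
    HasSum (fun m : ℤ => (-1 : ℝ) ^ m / ((m : ℝ)^2 + a^2)) (Real.pi / (a * Real.sinh (Real.pi * a))) := by
  have ha2 : a / 2 ≠ 0 := by positivity
  have hA := coth_sum ha
  have hB := (coth_sum ha2).mul_left (1/4)
  let e : ℤ ⊕ ℤ → ℤ := Sum.elim (fun m => 2*m) (fun m => 2*m+1)
  have he : Function.Bijective e := by
    constructor
    · rintro (a | a) (b | b) h <;> simp [e] at h ⊢ <;> omega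
    · intro m
      rcases Int.even_or_odd' m with ⟨k, hk | hk⟩
      · exact ⟨Sum.inl k, by simp [e]; omega⟩
      · exact ⟨Sum.inr k, by simp [e]; omega⟩
  have hE : HasSum (fun m : ℤ => 1 / (((2*m : ℤ) : ℝ)^2 + a^2))
      (1 / 4 * (Real.pi * Real.cosh (Real.pi * (a / 2)) / (a / 2 * Real.sinh (Real.pi * (a / 2))))) := by
    refine Eq.mpr (congrArg (fun f => HasSum f _) (funext fun n => ?_)) hB
    push_cast
    have : ((2:ℝ)*n)^2 + a^2 = 4 * ((n:ℝ)^2 + (a/2)^2) := by ring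
    rw [this, one_div_mul_one_div]
  have hO : Summable (fun m : ℤ => 1 / (((2*m+1 : ℤ) : ℝ)^2 + a^2)) :=
    hA.summable.comp_injective (i := fun m : ℤ => 2*m+1) (fun x y h => by simpa using h)
  have hAll : HasSum (fun m : ℤ => 1 / ((m : ℝ)^2 + a^2)) _ := (Equiv.ofBijective e he).hasSum_iff.1
    (HasSum.sum (f := (fun m : ℤ => 1 / ((m : ℝ)^2 + a^2)) ∘ Equiv.ofBijective e he) hE hO.hasSum)
  have hAlt : HasSum (fun m : ℤ => (-1 : ℝ) ^ m / ((m : ℝ)^2 + a^2)) _ := (Equiv.ofBijective e he).hasSum_iff.1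
    (HasSum.sum (f := (fun m : ℤ => (-1 : ℝ) ^ m / ((m : ℝ)^2 + a^2)) ∘ Equiv.ofBijective e he)
      (Eq.mpr (congrArg (fun f => HasSum f _) (funext fun n => by
        simp [e, zpow_mul])) hE)
      (Eq.mpr (congrArg (fun f => HasSum f _) (funext fun n => by
        simp [e, zpow_mul, zpow_add₀, neg_div])) hO.hasSum.neg))
  have hu := hA.unique hAll
  have hs : Real.sinh (Real.pi * (a/2)) ≠ 0 := by
    rw [Ne, Real.sinh_eq_zero]; exact mul_ne_zero Real.pi_ne_zero ha2
  have hc : Real.cosh (Real.pi * (a/2)) ≠ 0 := (Real.cosh_pos _).ne'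
  convert! hAlt using 1
  rw [← sub_eq_iff_eq_add'] at hu
  rw [← hu]
  have e1 : Real.pi * a = 2 * (Real.pi * (a/2)) := by ring
  rw [e1, Real.sinh_two_mul, Real.cosh_two_mul]
  have := Real.cosh_sq (Real.pi * (a/2))
  generalize Real.cosh (Real.pi * (a/2)) = c at *
  generalize Real.sinh (Real.pi * (a/2)) = s at *
  field_simp
  linear_combination (-4) * this

/-- the even summand on `ℤ` -/
noncomputable def vv (y : ℝ) (k : ℤ) : ℝ := -(-1) ^ k / ((k : ℝ) * Real.sinh (Real.pi * k * y))

lemma sgn_neg (k : ℤ) : (-1 : ℝ) ^ (-k) = (-1) ^ k := by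
  rw [zpow_neg, ← inv_zpow]; norm_num

lemma vv_neg (y : ℝ) (k : ℤ) : vv y (-k) = vv y k := by
  unfold vv
  rw [sgn_neg]
  push_cast
  rw [show Real.pi * -(k:ℝ) * y = -(Real.pi * k * y) by ring, Real.sinh_neg, neg_mul_neg]

lemma vv_hasSum {y : ℝ} (hy : 0 < y) : ∃ P : ℝ, 0 < P ∧
    Tendsto (fun N : ℕ => ∏ j ∈ Finset.range N, (1 + Real.exp (-Real.pi * y) ^ (2*j+1))) atTop (nhds P) ∧
    HasSum (vv y) (4 * Real.log P) := by
  obtain ⟨P, hP, ht, hs⟩ := lambert hy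
  refine ⟨P, hP, ht, ?_⟩
  have h1 : HasSum (fun n : ℕ => vv y ((n:ℤ) + 1)) (2 * Real.log P) := by
    refine Eq.mpr (congrArg (fun f => HasSum f _) (funext fun n => ?_)) hs
    unfold vv
    rw [sgn_add, zpow_natCast]
    push_cast
    simp
  have h2 : HasSum (fun n : ℕ => vv y (-((n:ℤ) + 1))) (2 * Real.log P) := by
    simpa only [vv_neg] using h1
  have h3 := HasSum.of_add_one_of_neg_add_one h1 h2
  have h4 : 4 * Real.log P = 2 * Real.log P + vv y 0 + 2 * Real.log P := by
    simp [vv]; ring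
  rw [h4]; exact h3

lemma final_algebra {T3 T4 W s : ℝ} (h3 : 0 < T3) (h4 : 0 < T4) (hW : 0 < W) (hs : 0 < s) (hs4 : s^4 = 2)
    (e1 : T3^4 = T4^4 + W^4) (e2 : s * T3 = T4 + W) :
    W * T4 / T3^2 = Real.sqrt 2 * (1 - Real.sqrt 3 / 2) := by
  have hr2 : Real.sqrt 2 = s^2 := by
    rw [show (2:ℝ) = (s^2)^2 by rw [← hs4]; ring, Real.sqrt_sq (by positivity)]
  have hr3 : Real.sqrt 3 ^ 2 = 3 := Real.sq_sqrt (by norm_num)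
  have hr3p : 0 < Real.sqrt 3 := Real.sqrt_pos.2 (by norm_num)
  set r := Real.sqrt 3
  rw [hr2]
  set p := W * T4 / T3^2 with hp
  have hpW : W * T4 = p * T3^2 := by rw [hp]; field_simp
  have hquad : (2 * p^2 - 4 * s^2 * p + 1) * T3^4 = 0 := by
    have : (T4 + W)^4 = T4^4 + W^4 + 4 * (W*T4) * (T4+W)^2 - 2 * (W*T4)^2 := by ring
    rw [← e2, ← e1, hpW] at this
    linear_combination this - T3^4 * hs4
  have hq2 : 2 * p^2 - 4 * s^2 * p + 1 = 0 := by
    rcases mul_eq_zero.1 hquad with h | h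
    · exact h
    · exact absurd h (by positivity)
  have hfac : (p - s^2 * (1 - r/2)) * (p - s^2 * (1 + r/2)) = 0 := by
    linear_combination hq2 / 2 + (1 - r^2/4) * hs4 - (1/2) * hr3
  have hle : p ≤ s^2 / 4 := by
    have : 4 * (W * T4) ≤ (T4 + W)^2 := by nlinarith [sq_nonneg (T4 - W)]
    rw [← e2, hpW] at this
    have h5 : 0 < T3^2 := by positivity
    by_contra hcon
    push Not at hcon
    nlinarith
  rcases mul_eq_zero.1 hfac with h | h
  · linarith
  · have : 0 < s^2 := by positivity
    have : 0 < s^2 * r := by positivity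
    nlinarith

lemma log_value {P1 P3 : ℝ} (hP1 : 0 < P1) (hP3 : 0 < P3)
    (h1 : Tendsto (fun N : ℕ => ∏ j ∈ Finset.range N, (1 + Real.exp (-Real.pi * 1) ^ (2*j+1))) atTop (nhds P1))
    (h3 : Tendsto (fun N : ℕ => ∏ j ∈ Finset.range N, (1 + Real.exp (-Real.pi * 3) ^ (2*j+1))) atTop (nhds P3)) :
    2 * Real.log P1 - 2 / 3 * Real.log P3 = 2 / 9 * Real.log (2 * (Real.sqrt 3 - 1)) := by
  set e := Real.exp (-Real.pi/4) with he
  have he0 : 0 < e := Real.exp_pos _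
  have he1 : e < 1 := by
    rw [he, Real.exp_lt_one_iff]; linarith [Real.pi_pos]
  have hq1 : Real.exp (-Real.pi * 1) = e^4 := by
    rw [he, ← Real.exp_nat_mul]; congr 1; push_cast; ring
  have hq1' : Real.exp (-Real.pi) = e^4 := by rw [← hq1, mul_one]
  have hq3 : Real.exp (-Real.pi * 3) = (e^4)^3 := by
    rw [← hq1, ← Real.exp_nat_mul]; congr 1; push_cast; ring
  rw [hq1] at h1
  rw [hq3] at h3
  have q0 : 0 < e^4 := by positivity
  have q1 : e^4 < 1 := pow_lt_one₀ he0.le he1 (by norm_num)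
  obtain ⟨w1, p3, p4, p2⟩ := weber_product q0 q1 h1
  obtain ⟨w3, P3', P4', P2'⟩ := weber_product (by positivity) (pow_lt_one₀ q0.le q1 (by norm_num)) h3
  have hS := theta_S
  rw [hq1'] at hS
  have J1 := jacobi_quartic (q := e^2) (by positivity) (pow_lt_one₀ he0.le he1 (by norm_num))
  have J3 := jacobi_quartic (q := e^6) (by positivity) (pow_lt_one₀ he0.le he1 (by norm_num))
  rw [show (e^2)^2 = e^4 by ring] at J1
  rw [show (e^6)^2 = (e^4)^3 by ring] at J3
  have M := cubic_modular q0 q1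
  generalize th3 (e^4) = t3 at *
  generalize th4 (e^4) = t4 at *
  generalize psi (e^4) = t2 at *
  generalize th3 ((e^4)^3) = T3 at *
  generalize th4 ((e^4)^3) = T4 at *
  generalize psi ((e^4)^3) = T2 at *
  have hJ1 : t3^4 = 2 * t4^4 := by rw [J1, hS]; ring
  have hs4 : (t3/t4)^4 = 2 := by rw [div_pow, hJ1]; field_simp
  have hs0 : 0 < t3/t4 := by positivity
  have hW : 0 < e^3 * T2 := by positivity
  have key := final_algebra P3' P4' hW hs0 hs4 (by rw [J3]; ring) (by
    have : t3 * T3 = t4 * (T4 + e^3 * T2) := by rw [M, hS]; ring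
    field_simp
    linear_combination this)
  have hsq : (t3/t4)^2 = Real.sqrt 2 := by
    rw [← hs4, show (t3/t4)^4 = ((t3/t4)^2)^2 by ring, Real.sqrt_sq (by positivity)]
  have r2 : Real.sqrt 2 ^ 2 = 2 := Real.sq_sqrt (by norm_num)
  have r3 : Real.sqrt 3 ^ 2 = 3 := Real.sq_sqrt (by norm_num)
  have r2p : 0 < Real.sqrt 2 := Real.sqrt_pos.2 (by norm_num)
  have r3p : 1 < Real.sqrt 3 := by
    rw [Real.lt_sqrt (by norm_num)]; norm_num
  have v1 : P1^6 = 2 * Real.sqrt 2 * e := by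
    rw [← hsq]
    have : P1^6 * (t4 * t4) = 2 * t3^2 * e := by
      linear_combination e * w1 + P1^6 * t4 * hS
    field_simp
    linear_combination this
  have v3 : P3^6 * (Real.sqrt 2 * (1 - Real.sqrt 3 / 2)) = 2 * e^3 := by
    rw [← key]
    field_simp
    linear_combination w3
  -- combine
  have comb : P1^18 = P3^6 * (2 * (Real.sqrt 3 - 1))^2 := by
    have h18 : P1^18 = (2 * Real.sqrt 2 * e)^3 := by rw [← v1]; ring
    rw [h18]
    have : (2 * (Real.sqrt 3 - 1))^2 = 8 * Real.sqrt 2 * (Real.sqrt 2 * (1 - Real.sqrt 3 / 2)) := by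
      linear_combination 4 * r3 - 8 * (1 - Real.sqrt 3 / 2) * r2
    rw [this]
    linear_combination 8 * Real.sqrt 2 * e^3 * r2 - 8 * Real.sqrt 2 * v3
  have hl := congrArg Real.log comb
  have hx : 0 < 2 * (Real.sqrt 3 - 1) := by linarith
  rw [Real.log_mul (by positivity) (by positivity), Real.log_pow, Real.log_pow, Real.log_pow] at hl
  push_cast at hl
  linarith

open Filter

/-- `∑∑ (-1)^{m+n}/(m² + (3n+1)²) = (2π/9) log(2(√3 - 1))`. -/
theorem F31_at_one :
    Tendsto (fun N : ℕ => ∑ n ∈ Finset.Ioo (-(N : ℤ)) (N : ℤ),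
        ∑' m : ℤ, (-1 : ℝ) ^ (m + n) / ((m : ℝ) ^ 2 + (3 * (n : ℝ) + 1) ^ 2))
      atTop
      (nhds (2 * Real.pi / 9 * Real.log (2 * (Real.sqrt 3 - 1)))) := by
  obtain ⟨P1, hP1, t1, s1⟩ := vv_hasSum (y := 1) one_pos
  obtain ⟨P3, hP3, t3, s3⟩ := vv_hasSum (y := 3) (by norm_num)
  have hlog := log_value hP1 hP3 t1 t3
  let e : ℤ ⊕ (ℤ ⊕ ℤ) → ℤ := Sum.elim (fun m => 3*m) (Sum.elim (fun m => 3*m+1) (fun m => -(3*m+1)))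
  have he : Function.Bijective e := by
    constructor
    · rintro (a | a | a) (b | b | b) h <;> simp [e] at h ⊢ <;> omega
    · intro m
      have : m % 3 = 0 ∨ m % 3 = 1 ∨ m % 3 = 2 := by omega
      rcases this with h | h | h
      · exact ⟨Sum.inl (m/3), by simp [e]; omega⟩
      · exact ⟨Sum.inr (Sum.inl (m/3)), by simp [e]; omega⟩
      · exact ⟨Sum.inr (Sum.inr (-1 - m/3)), by simp [e]; omega⟩
  have f0 : HasSum (fun m : ℤ => vv 1 (3*m)) (1/3 * (4 * Real.log P3)) := by
    refine Eq.mpr (congrArg (fun f => HasSum f _) (funext fun m => ?_)) (s3.mul_left (1/3))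
    unfold vv
    rw [zpow_mul]
    push_cast
    rw [show Real.pi * (3 * (m:ℝ)) * 1 = Real.pi * m * 3 by ring]
    norm_num
    ring
  have f1 : Summable (fun m : ℤ => vv 1 (3*m+1)) :=
    s1.summable.comp_injective (i := fun m : ℤ => 3*m+1) (fun x y h => by simpa using h)
  have f2 : HasSum (fun m : ℤ => vv 1 (-(3*m+1))) (∑' m : ℤ, vv 1 (3*m+1)) := by
    simpa only [vv_neg] using f1.hasSum
  have hAll : HasSum (vv 1) _ := (Equiv.ofBijective e he).hasSum_iff.1
    (HasSum.sum (f := vv 1 ∘ Equiv.ofBijective e he) f0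
      (HasSum.sum (f := (vv 1 ∘ Equiv.ofBijective e he) ∘ Sum.inr) f1.hasSum f2))
  have hu := s1.unique hAll
  have hT : HasSum (fun n : ℤ => ∑' m : ℤ, (-1 : ℝ) ^ (m + n) / ((m : ℝ) ^ 2 + (3 * (n : ℝ) + 1) ^ 2))
      (2 * Real.pi / 9 * Real.log (2 * (Real.sqrt 3 - 1))) := by
    have hv : 2 * Real.pi / 9 * Real.log (2 * (Real.sqrt 3 - 1)) = Real.pi * ∑' m : ℤ, vv 1 (3*m+1) := by
      linear_combination Real.pi / 2 * hu - Real.pi * hlog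
    rw [hv]
    refine Eq.mpr (congrArg (fun f => HasSum f _) (funext fun n => ?_)) (f1.hasSum.mul_left Real.pi)
    have hn : (3 * (n:ℝ) + 1) ≠ 0 := by
      have : (3 * n + 1 : ℤ) ≠ 0 := by omega
      exact_mod_cast this
    have h := ((csch_sum hn).mul_left ((-1 : ℝ) ^ n)).tsum_eq
    have h2 : ∀ m : ℤ, (-1 : ℝ) ^ n * ((-1) ^ m / ((m : ℝ) ^ 2 + (3 * (n : ℝ) + 1) ^ 2)) =
        (-1 : ℝ) ^ (m + n) / ((m : ℝ) ^ 2 + (3 * (n : ℝ) + 1) ^ 2) := by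
      intro m; rw [sgn_add]; ring
    rw [tsum_congr h2] at h
    rw [h, vv, sgn_add, zpow_mul]
    push_cast
    norm_num
    ring
  have hT' : Tendsto (fun s : Finset ℤ => ∑ n ∈ s, ∑' m : ℤ, (-1 : ℝ) ^ (m + n) / ((m : ℝ) ^ 2 + (3 * (n : ℝ) + 1) ^ 2))
      atTop (nhds (2 * Real.pi / 9 * Real.log (2 * (Real.sqrt 3 - 1)))) := by
    unfold HasSum at hT
    rwa [SummationFilter.unconditional_filter] at hT
  refine hT'.comp (tendsto_atTop_finset_of_monotone (f := fun N : ℕ => Finset.Ioo (-(N:ℤ)) (N:ℤ)) ?_ ?_)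
  · intro a b hab
    exact Finset.Ioo_subset_Ioo (by omega) (by omega)
  · intro x
    exact ⟨x.natAbs + 1, by rw [Finset.mem_Ioo]; omega⟩
end
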